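/- arXiv:math/0603539 — 8 statements merged into one kernel-verified Lean document; each statement's English description precedes it below -/
import Mathlib

section
/- Let (X,d) be a geodesic metric space with property (◇) for a constant λ ≥ 1. Let x, y ∈ X be distinct points, set r := d(x,y), and let t ∈ (0,1) and 0 ≤ h < max{t, 1−t}·r. Then the set A := B(x, tr + h) ∩ B(y, (1−t)r + h) satisfies diam A ≤ 4λh. -/
/-- A constant-speed geodesic from `x` to `y`, parameterized on `[0,1]`. -/
def IsGeodesicSegment {X : Type*} [MetricSpace X] (c : ℝ → X) (x y : X) : Prop :=
  c 0 = x ∧ c 1 = y ∧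
    ∀ s ∈ Set.Icc (0:ℝ) 1, ∀ t ∈ Set.Icc (0:ℝ) 1,
      dist (c s) (c t) = dist x y * |s - t|

/-- A metric space is geodesic if any two points are joined by a constant-speed geodesic. -/
def IsGeodesicSpace (X : Type*) [MetricSpace X] : Prop :=
  ∀ x y : X, ∃ c : ℝ → X, IsGeodesicSegment c x y
/-- Property (◇) with constant `lam`: for any two closed balls with non-empty intersection
there are `z, z'` and `ν ≥ 0` with `B(z,ν) ⊆ B₁ ∩ B₂ ⊆ B(z', lam * ν)`. -/
def HasDiamondProperty (X : Type*) [MetricSpace X] (lam : ℝ) : Prop :=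
  ∀ (x₁ x₂ : X) (r₁ r₂ : ℝ),
    (Metric.closedBall x₁ r₁ ∩ Metric.closedBall x₂ r₂).Nonempty →
    ∃ (z z' : X) (ν : ℝ), 0 ≤ ν ∧
      Metric.closedBall z ν ⊆ Metric.closedBall x₁ r₁ ∩ Metric.closedBall x₂ r₂ ∧
      Metric.closedBall x₁ r₁ ∩ Metric.closedBall x₂ r₂ ⊆ Metric.closedBall z' (lam * ν)

/-!
Property (◇) squeezes the lens `A` between `closedBall z ν` and a ball of radius `lam * ν`, so only
the inner radius `ν` has to be bounded. The condition on `h` says exactly that the ball around one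
of the two centres misses the other centre, say `y`; hence so does `closedBall z ν`. One can
therefore walk from `z` a full distance `ν` towards `y` without leaving `A`, and the triangle
inequality for `x`, `y` and the point reached bounds `ν` by the excess of the sum of the two radii
over `dist x y`, which is `2 * h`.
-/

section

open Metric

variable {X : Type*} [MetricSpace X] {lam : ℝ} {x y z : X} {r₁ r₂ ν : ℝ}

namespace IsGeodesicSpace

theorem exists_dist_eq_dist_eq_sub (hgeo : IsGeodesicSpace X) {s : ℝ} (hs : 0 ≤ s)
    (hsle : s ≤ dist x y) : ∃ w, dist w x = s ∧ dist w y = dist x y - s := by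
  obtain ⟨c, hc₀, hc₁, hc⟩ := hgeo x y
  have hmem : s / dist x y ∈ Set.Icc (0 : ℝ) 1 :=
    ⟨div_nonneg hs dist_nonneg, div_le_one_of_le₀ hsle dist_nonneg⟩
  have hmul : dist x y * (s / dist x y) = s :=
    mul_div_cancel_of_imp' fun hxy ↦ le_antisymm (hxy ▸ hsle) hs
  refine ⟨c (s / dist x y), ?_, ?_⟩
  · calc
      dist (c (s / dist x y)) x = dist x y * |s / dist x y - 0| := by
        rw [← hc _ hmem 0 (by simp), hc₀]
      _ = s := by rw [sub_zero, abs_of_nonneg hmem.1, hmul]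
  · calc
      dist (c (s / dist x y)) y = dist x y * |s / dist x y - 1| := by
        rw [← hc _ hmem 1 (by simp), hc₁]
      _ = dist x y - s := by
        rw [abs_sub_comm, abs_of_nonneg (sub_nonneg.2 hmem.2), mul_sub, mul_one, hmul]

theorem add_dist_le_of_closedBall_subset (hgeo : IsGeodesicSpace X) (hν : 0 ≤ ν)
    (hsub : closedBall z ν ⊆ closedBall x r₁) (hνy : ν ≤ dist z y) :
    ν + dist x y ≤ r₁ + dist z y := by
  obtain ⟨w, hwz, hwy⟩ := hgeo.exists_dist_eq_dist_eq_sub hν hνy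
  have hwx : dist w x ≤ r₁ := hsub hwz.le
  linarith [dist_triangle_left x y w]

theorem add_dist_le_of_closedBall_subset_inter_of_lt (hgeo : IsGeodesicSpace X) (hν : 0 ≤ ν)
    (hsub : closedBall z ν ⊆ closedBall x r₁ ∩ closedBall y r₂) (hr : r₁ < dist x y) :
    ν + dist x y ≤ r₁ + r₂ := by
  obtain ⟨hsub₁, hsub₂⟩ := Set.subset_inter_iff.1 hsub
  have hy : y ∉ closedBall z ν := fun h ↦ (mem_closedBall'.1 (hsub₁ h)).not_gt hr
  have hνy : ν ≤ dist z y := (not_le.1 (mt mem_closedBall'.2 hy)).le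
  have hzy : dist z y ≤ r₂ := hsub₂ (mem_closedBall_self hν)
  linarith [hgeo.add_dist_le_of_closedBall_subset hν hsub₁ hνy]

theorem add_dist_le_of_closedBall_subset_inter (hgeo : IsGeodesicSpace X) (hν : 0 ≤ ν)
    (hsub : closedBall z ν ⊆ closedBall x r₁ ∩ closedBall y r₂) (hr : min r₁ r₂ < dist x y) :
    ν + dist x y ≤ r₁ + r₂ := by
  rcases min_lt_iff.1 hr with h₁ | h₂
  · exact hgeo.add_dist_le_of_closedBall_subset_inter_of_lt hν hsub h₁
  · rw [dist_comm, add_comm r₁]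
    rw [dist_comm] at h₂
    rw [Set.inter_comm] at hsub
    exact hgeo.add_dist_le_of_closedBall_subset_inter_of_lt hν hsub h₂

end IsGeodesicSpace

theorem HasDiamondProperty.exists_closedBall_subset_inter_diam_le (hdia : HasDiamondProperty X lam)
    (hne : (closedBall x r₁ ∩ closedBall y r₂).Nonempty) :
    ∃ z ν, 0 ≤ ν ∧ closedBall z ν ⊆ closedBall x r₁ ∩ closedBall y r₂ ∧
      diam (closedBall x r₁ ∩ closedBall y r₂) ≤ 2 * (lam * ν) := by
  obtain ⟨z, z', ν, hν, hinner, houter⟩ := hdia x y r₁ r₂ hne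
  have hradius : 0 ≤ lam * ν := nonempty_closedBall.1 (hne.mono houter)
  exact ⟨z, ν, hν, hinner,
    (diam_mono houter isBounded_closedBall).trans (diam_closedBall hradius)⟩

theorem diam_ball_intersection_le_general (hlam : 0 ≤ lam) (hgeo : IsGeodesicSpace X)
    (hdia : HasDiamondProperty X lam) (hr : min r₁ r₂ < dist x y) (hdist : dist x y ≤ r₁ + r₂) :
    diam (closedBall x r₁ ∩ closedBall y r₂) ≤ 2 * lam * (r₁ + r₂ - dist x y) := by
  rcases (closedBall x r₁ ∩ closedBall y r₂).eq_empty_or_nonempty with hempty | hne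
  · rw [hempty, diam_empty]
    exact mul_nonneg (by positivity) (sub_nonneg.2 hdist)
  · obtain ⟨z, ν, hν, hsub, hdiam⟩ := hdia.exists_closedBall_subset_inter_diam_le hne
    have hνle : ν ≤ r₁ + r₂ - dist x y :=
      le_sub_iff_add_le.2 (hgeo.add_dist_le_of_closedBall_subset_inter hν hsub hr)
    calc
      diam (closedBall x r₁ ∩ closedBall y r₂) ≤ 2 * (lam * ν) := hdiam
      _ = 2 * lam * ν := by ring
      _ ≤ 2 * lam * (r₁ + r₂ - dist x y) := by gcongr

end

theorem diam_ball_intersection_le {X : Type*} [MetricSpace X] (lam : ℝ) (hlam : 1 ≤ lam)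
    (hgeo : IsGeodesicSpace X) (hdia : HasDiamondProperty X lam)
    (x y : X) (hxy : x ≠ y) (t h : ℝ) (ht : t ∈ Set.Ioo (0:ℝ) 1)
    (hh : 0 ≤ h) (hh' : h < max t (1 - t) * dist x y) :
    Metric.diam (Metric.closedBall x (t * dist x y + h) ∩
      Metric.closedBall y ((1 - t) * dist x y + h)) ≤ 4 * lam * h := by
  rw [max_mul_of_nonneg _ _ dist_nonneg, lt_max_iff] at hh'
  have hr : min (t * dist x y + h) ((1 - t) * dist x y + h) < dist x y :=
    min_lt_iff.2 (hh'.symm.imp (fun _ ↦ by linarith) (fun _ ↦ by linarith))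
  convert diam_ball_intersection_le_general (zero_le_one.trans hlam) hgeo hdia hr (by linarith)
    using 1
  ring
end

section
/- Let (X,d) be a geodesic metric space with property (◇) for some constant λ ≥ 1. Then X is uniquely geodesic: if c₁, c₂ : [0,1] → X are constant-speed geodesics with c₁(0) = c₂(0) and c₁(1) = c₂(1), then c₁(t) = c₂(t) for all t ∈ [0,1]. -/
/-!
Let `D = dist x y`. Both `c₁ t` and `c₂ t` lie in `B(x, tD) ∩ B(y, (1 - t)D)`, and since the radii
add up to `D`, this intersection is contained in the sphere of radius `(1 - t)D` around `y`. If that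
radius is `0`, the sphere is a single point. Otherwise, in a geodesic space, it contains no ball of
positive radius, because from each of its points one can move a little towards `y`. Then (◇) can
only hold with `ν = 0`, which puts both points into a ball of radius `0`.
-/

open Filter Metric Set Topology

theorem closedBall_inter_closedBall_subset_sphere {X : Type*} [PseudoMetricSpace X] {x y : X}
    {r s : ℝ} (h : r + s ≤ dist x y) : closedBall x r ∩ closedBall y s ⊆ sphere y s := by
  rintro p ⟨hpx, hpy⟩
  rw [mem_closedBall] at hpx hpy
  rw [mem_sphere]
  linarith [dist_triangle_left x y p]

section

variable {X : Type*} [MetricSpace X]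

namespace IsGeodesicSegment

variable {c : ℝ → X} {x y : X} {t : ℝ}

theorem dist_left (hc : IsGeodesicSegment c x y) (ht : t ∈ Icc 0 1) :
    dist (c t) x = t * dist x y := by
  obtain ⟨rfl, -, hdist⟩ := hc
  rw [hdist t ht 0 (left_mem_Icc.2 zero_le_one), sub_zero, abs_of_nonneg ht.1, mul_comm]

theorem dist_right (hc : IsGeodesicSegment c x y) (ht : t ∈ Icc 0 1) :
    dist (c t) y = (1 - t) * dist x y := by
  obtain ⟨-, rfl, hdist⟩ := hc
  rw [hdist t ht 1 (right_mem_Icc.2 zero_le_one), abs_sub_comm,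
    abs_of_nonneg (sub_nonneg.2 ht.2), mul_comm]

theorem mem_closedBall_inter_closedBall (hc : IsGeodesicSegment c x y) (ht : t ∈ Icc 0 1) :
    c t ∈ closedBall x (t * dist x y) ∩ closedBall y ((1 - t) * dist x y) :=
  ⟨(hc.dist_left ht).le, (hc.dist_right ht).le⟩

theorem tendsto_nhdsGT_zero (hc : IsGeodesicSegment c x y) : Tendsto c (𝓝[>] 0) (𝓝 x) := by
  have hlim : Tendsto (fun t : ℝ ↦ t * dist x y) (𝓝[>] 0) (𝓝 0) :=
    tendsto_nhdsWithin_of_tendsto_nhds (Continuous.tendsto' (by fun_prop) _ _ (zero_mul _))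
  refine tendsto_iff_dist_tendsto_zero.2 (hlim.congr' ?_)
  filter_upwards [Ioo_mem_nhdsGT one_pos] with t ht
  exact (hc.dist_left (Ioo_subset_Icc_self ht)).symm

end IsGeodesicSegment

theorem IsGeodesicSpace.interior_sphere (hgeo : IsGeodesicSpace X) (x : X) {r : ℝ} (hr : r ≠ 0) :
    interior (sphere x r) = ∅ := by
  refine eq_empty_of_forall_notMem fun z hz ↦ ?_
  have hzr : dist z x = r := mem_sphere.1 (interior_subset hz)
  obtain ⟨c, hc⟩ := hgeo z x
  have hsphere : ∀ᶠ t in 𝓝[>] 0, c t ∈ sphere x r :=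
    hc.tendsto_nhdsGT_zero (mem_interior_iff_mem_nhds.1 hz)
  obtain ⟨t, hct, ht⟩ := (hsphere.and (Ioo_mem_nhdsGT one_pos)).exists
  have hshrink : (1 - t) * r = r := calc
    (1 - t) * r = dist (c t) x := by rw [hc.dist_right (Ioo_subset_Icc_self ht), hzr]
    _ = r := hct
  have htr : t * r = 0 := by linarith
  exact mul_ne_zero ht.1.ne' hr htr

namespace HasDiamondProperty

variable {lam : ℝ} {x y : X} {r s : ℝ}

theorem subsingleton_inter_of_interior_eq_empty (hdia : HasDiamondProperty X lam)
    (hint : interior (closedBall x r ∩ closedBall y s) = ∅) :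
    (closedBall x r ∩ closedBall y s).Subsingleton := by
  intro p hp q hq
  obtain ⟨z, z', ν, hν, hsub, hsup⟩ := hdia x y r s ⟨p, hp⟩
  obtain rfl : ν = 0 := by
    by_contra hne
    have hz : z ∈ interior (closedBall x r ∩ closedBall y s) :=
      mem_interior_iff_mem_nhds.2
        (mem_of_superset (closedBall_mem_nhds z (hν.lt_of_ne' hne)) hsub)
    exact notMem_empty z (hint ▸ hz)
  exact subsingleton_closedBall z' (mul_zero lam).le (hsup hp) (hsup hq)

theorem subsingleton_inter_of_add_le_dist (hdia : HasDiamondProperty X lam)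
    (hsphere : ∀ (x : X) (r : ℝ), r ≠ 0 → interior (sphere x r) = ∅) (h : r + s ≤ dist x y) :
    (closedBall x r ∩ closedBall y s).Subsingleton := by
  have hsub := closedBall_inter_closedBall_subset_sphere h
  rcases eq_or_ne s 0 with rfl | hs
  · exact (subsingleton_sphere y le_rfl).anti hsub
  · exact hdia.subsingleton_inter_of_interior_eq_empty
      (subset_eq_empty (interior_mono hsub) (hsphere y s hs))

end HasDiamondProperty

theorem uniquely_geodesic_of_diamond_general {lam : ℝ}
    (hsphere : ∀ (x : X) (r : ℝ), r ≠ 0 → interior (sphere x r) = ∅)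
    (hdia : HasDiamondProperty X lam) {c₁ c₂ : ℝ → X} {x y : X}
    (h₁ : IsGeodesicSegment c₁ x y) (h₂ : IsGeodesicSegment c₂ x y) :
    EqOn c₁ c₂ (Icc 0 1) := by
  intro t ht
  have hradii : t * dist x y + (1 - t) * dist x y = dist x y := by ring
  exact hdia.subsingleton_inter_of_add_le_dist hsphere hradii.le
    (h₁.mem_closedBall_inter_closedBall ht) (h₂.mem_closedBall_inter_closedBall ht)

end

theorem uniquely_geodesic_of_diamond {X : Type*} [MetricSpace X] (lam : ℝ) (hlam : 1 ≤ lam)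
    (hgeo : IsGeodesicSpace X) (hdia : HasDiamondProperty X lam)
    (c₁ c₂ : ℝ → X) (x y : X)
    (h₁ : IsGeodesicSegment c₁ x y) (h₂ : IsGeodesicSegment c₂ x y) :
    ∀ t ∈ Set.Icc (0:ℝ) 1, c₁ t = c₂ t :=
  uniquely_geodesic_of_diamond_general (fun x _ hr ↦ hgeo.interior_sphere x hr) hdia h₁ h₂
end

section
/- Let (X,d) be a geodesic metric space with property (◇) for a constant λ ≥ 1, let U ⊆ ℝ² be open, and let φ : U → X be Lipschitz. Then for almost every z ∈ U the metric directional derivative md φ_z(v) exists for every v ∈ ℝ² and is degenerate, i.e., there exists v ≠ 0 with md φ_z(v) = 0. -/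
/-- The metric directional derivative of `φ` at `z` in direction `v` is the limit
`lim_{r → 0⁺} d(φ(z + r v), φ z) / r`; `HasMDDerivAt φ z v L` says it exists and equals `L`. -/
def HasMDDerivAt {X : Type*} [MetricSpace X] {k : ℕ}
    (φ : EuclideanSpace ℝ (Fin k) → X) (z v : EuclideanSpace ℝ (Fin k)) (L : ℝ) : Prop :=
  Filter.Tendsto (fun r : ℝ => dist (φ (z + r • v)) (φ z) / r)
    (nhdsWithin 0 (Set.Ioi 0)) (nhds L)

/-!
The metric differential `N` of `φ` at almost every point is a seminorm (Kirchheim). After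
embedding the image of `φ` isometrically in `ℓ^∞`, it is the supremum of `|D φᵢ|` over the
coordinates. The upper bound has to be uniform in `i`: replacing each `φᵢ` by its average over a
small ball bounds its increments by averages of that supremum, which converge at its Lebesgue
points.

In a geodesic space, property (◇) bounds the diameter of the intersection of two balls by a multiple
of the overlap `R₁ + R₂ - d(x₁, x₂)`. This bound passes to the blow-up `N`. Suppose `N v > 0` and
`N` is differentiable at `v`. If `DN(v) w = 0`, the balls about `± v` of radius `N v + o(t)` contain
both `0` and `t w` but overlap by only `o(t)`, so `N w = 0`. Thus `ker DN(v) ⊆ ker N` and `N = |ℓ|`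
for a linear functional `ℓ`, which vanishes somewhere off the origin in dimension at least two.
-/

open Bornology Filter MeasureTheory Metric ProbabilityTheory Set Topology
open scoped ENNReal NNReal lp

section Averages

variable {E F : Type*} [NormedAddCommGroup E] [MeasurableSpace E] [BorelSpace E]
  [NormedAddCommGroup F]

lemma setAverage_closedBall_eq_integral_cond [NormedSpace ℝ F] (μ : Measure E) [μ.IsAddHaarMeasure]
    (g : E → F) (c : E) (ρ : ℝ) :
    ⨍ y in closedBall c ρ, g y ∂μ = ∫ h, g (c + h) ∂μ[|closedBall 0 ρ] := by
  have htranslate := (measurePreserving_add_left μ c).setIntegral_preimage_emb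
    (measurableEmbedding_addLeft c) g (closedBall c ρ)
  rw [preimage_add_closedBall, sub_self] at htranslate
  rw [setAverage_eq', ProbabilityTheory.cond, integral_smul_measure, integral_smul_measure,
    htranslate, Measure.addHaar_closedBall_center]

lemma integrable_cond_translate [ProperSpace E] {μ : Measure E} [μ.IsAddHaarMeasure]
    {g : E → F} (hg : LocallyIntegrable g μ) (c : E) {ρ : ℝ} (hρ : 0 < ρ) :
    Integrable (fun h => g (c + h)) μ[|closedBall 0 ρ] := by
  have hball : IntegrableOn g (closedBall c ρ) μ :=
    hg.integrableOn_isCompact (isCompact_closedBall _ _)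
  rw [← (measurePreserving_add_left μ c).integrableOn_comp_preimage
    (measurableEmbedding_addLeft c), preimage_add_closedBall, sub_self] at hball
  exact hball.smul_measure (ENNReal.inv_ne_top.2 (measure_closedBall_pos μ 0 hρ).ne')

variable {K : ℝ≥0}

lemma integrable_translate [SecondCountableTopologyEither E F] {f : E → F} (hf : LipschitzWith K f)
    {ν : Measure E} [IsFiniteMeasure ν] {ρ : ℝ} (hν : ∀ᵐ h ∂ν, ‖h‖ ≤ ρ) (p : E) :
    Integrable (fun h => f (p + h)) ν := by
  refine .of_bound (hf.continuous.comp (by fun_prop)).aestronglyMeasurable (‖f p‖ + K * ρ) ?_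
  filter_upwards [hν] with h hh
  calc ‖f (p + h)‖ ≤ ‖f p‖ + ‖f (p + h) - f p‖ := norm_le_norm_add_norm_sub' _ _
    _ ≤ ‖f p‖ + K * ρ := by
      gcongr
      simpa using hf.norm_sub_le_of_le (by simpa using hh : ‖p + h - p‖ ≤ ρ)

variable [NormedSpace ℝ F]

lemma norm_integral_translate_sub_le [SecondCountableTopologyEither E F] [CompleteSpace F]
    {f : E → F} (hf : LipschitzWith K f) {ν : Measure E} [IsProbabilityMeasure ν] {ρ : ℝ}
    (hν : ∀ᵐ h ∂ν, ‖h‖ ≤ ρ) (p : E) :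
    ‖∫ h, f (p + h) ∂ν - f p‖ ≤ K * ρ := by
  have hsub : ∫ h, f (p + h) ∂ν - f p = ∫ h, (f (p + h) - f p) ∂ν := by
    rw [integral_sub (integrable_translate hf hν p) (integrable_const _)]
    simp only [integral_const, probReal_univ, one_smul]
  rw [hsub]
  refine (norm_integral_le_of_norm_le_const ?_).trans_eq (by rw [probReal_univ, mul_one])
  filter_upwards [hν] with h hh
  exact hf.norm_sub_le_of_le (by simpa using hh)

variable [NormedSpace ℝ E] [FiniteDimensional ℝ E]

lemma hasFDerivAt_integral_translate [FiniteDimensional ℝ F] {μ : Measure E} [μ.IsAddHaarMeasure]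
    {f : E → F} (hf : LipschitzWith K f) {ν : Measure E} [IsFiniteMeasure ν] (hνμ : ν ≪ μ) {p : E}
    (hint : Integrable (fun h => f (p + h)) ν) :
    Integrable (fun h => fderiv ℝ f (p + h)) ν ∧
      HasFDerivAt (fun q => ∫ h, f (q + h) ∂ν) (∫ h, fderiv ℝ f (p + h) ∂ν) p := by
  have := FiniteDimensional.complete ℝ F
  refine hasFDerivAt_integral_of_dominated_loc_of_lip (bound := fun _ => K) univ_mem
    (.of_forall fun q => (hf.continuous.comp (by fun_prop)).aestronglyMeasurable) hint
    ((measurable_fderiv ℝ f).comp (measurable_const_add p)).aestronglyMeasurable ?_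
    (integrable_const _) ?_
  · refine .of_forall fun h => LipschitzOnWith.of_dist_le_mul fun q _ q' _ => ?_
    simpa using hf.dist_le_mul (q + h) (q' + h)
  · have hdiff : ∀ᵐ h ∂μ, DifferentiableAt ℝ f (p + h) :=
      (measurePreserving_add_left μ p).quasiMeasurePreserving.ae hf.ae_differentiableAt
    filter_upwards [hνμ.ae_le hdiff] with h hh
    exact (hasFDerivAt_comp_add_right h).2 hh.hasFDerivAt

lemma exists_integral_translate_sub_eq {μ : Measure E} [μ.IsAddHaarMeasure] {f : E → ℝ}
    (hf : LipschitzWith K f) {ν : Measure E} [IsFiniteMeasure ν] (hνμ : ν ≪ μ) {ρ : ℝ}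
    (hν : ∀ᵐ h ∂ν, ‖h‖ ≤ ρ) (p q : E) :
    ∃ c ∈ segment ℝ p q,
      ∫ h, f (q + h) ∂ν - ∫ h, f (p + h) ∂ν = ∫ h, fderiv ℝ f (c + h) (q - p) ∂ν := by
  have hderiv (c : E) := hasFDerivAt_integral_translate hf hνμ (integrable_translate hf hν c)
  obtain ⟨c, hc, hmv⟩ := domain_mvt (fun c _ => (hderiv c).2.hasFDerivWithinAt) convex_univ
    (mem_univ p) (mem_univ q)
  exact ⟨c, hc, hmv.trans (ContinuousLinearMap.integral_apply (hderiv c).1 _)⟩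

/-- Comparing `f` with its averages over balls of radius `ρ`, which are differentiable, costs
`2 * (K * ρ)`. -/
lemma abs_sub_le_of_setAverage_le {μ : Measure E} [μ.IsAddHaarMeasure] {f g : E → ℝ}
    (hf : LipschitzWith K f) (hg : LocallyIntegrable g μ) {v : E}
    (hfg : ∀ y, |fderiv ℝ f y v| ≤ g y) {p : E} {ρ r C : ℝ} (hρ : 0 < ρ) (hr : 0 ≤ r)
    (hC : ∀ c ∈ segment ℝ p (p + r • v), ⨍ y in closedBall c ρ, g y ∂μ ≤ C) :
    |f (p + r • v) - f p| ≤ 2 * (K * ρ) + r * C := by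
  set ν := μ[|closedBall 0 ρ]
  have : IsProbabilityMeasure ν := cond_isProbabilityMeasure_of_finite
    (measure_closedBall_pos μ 0 hρ).ne' measure_closedBall_lt_top.ne
  have hν : ∀ᵐ h ∂ν, ‖h‖ ≤ ρ := ae_cond_of_forall_mem measurableSet_closedBall (by simp)
  have hνμ : ν ≪ μ := cond_absolutelyContinuous
  obtain ⟨c, hc, hmv⟩ := exists_integral_translate_sub_eq hf hνμ hν p (p + r • v)
  have hincr : |∫ h, f (p + r • v + h) ∂ν - ∫ h, f (p + h) ∂ν| ≤ r * C :=
    calc |∫ h, f (p + r • v + h) ∂ν - ∫ h, f (p + h) ∂ν|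
        = r * ‖∫ h, fderiv ℝ f (c + h) v ∂ν‖ := by
          simp only [hmv, add_sub_cancel_left, map_smul, smul_eq_mul, integral_const_mul, abs_mul,
            abs_of_nonneg hr, Real.norm_eq_abs]
      _ ≤ r * ∫ h, g (c + h) ∂ν := by
          gcongr
          exact norm_integral_le_of_norm_le (integrable_cond_translate hg c hρ)
            (.of_forall fun h => hfg (c + h))
      _ ≤ r * C := by
          gcongr
          exact (setAverage_closedBall_eq_integral_cond μ g c ρ).symm.trans_le (hC c hc)
  have hq := abs_le.1 (norm_integral_translate_sub_le hf hν (p + r • v))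
  have hp := abs_le.1 (norm_integral_translate_sub_le hf hν p)
  rw [abs_le] at hincr ⊢
  constructor <;> linarith

lemma ae_tendstoUniformlyOn_setAverage [CompleteSpace F] {μ : Measure E} [μ.IsAddHaarMeasure]
    {g : E → F} (hg : LocallyIntegrable g μ) :
    ∀ᵐ z ∂μ, ∀ S : Set E, IsBounded S → ∀ η > 0,
      TendstoUniformlyOn (fun r c => ⨍ y in closedBall (z + r • c) (η * r), g y ∂μ)
        (fun _ => g z) (𝓝[>] 0) S := by
  have hlebesgue := ae_all_iff.2 fun n : ℕ =>
    IsUnifLocDoublingMeasure.ae_tendsto_average (μ := μ) hg n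
  filter_upwards [hlebesgue] with z hz S hS η hη
  obtain ⟨R, hR⟩ := hS.exists_norm_le
  obtain ⟨n, hn⟩ := exists_nat_ge (R / η)
  rw [div_le_iff₀ hη] at hn
  have hradius : Tendsto (fun r : ℝ => η * r) (𝓝[>] 0) (𝓝[>] 0) := by
    refine tendsto_nhdsWithin_iff.2 ⟨?_, ?_⟩
    · exact (Continuous.tendsto' (by fun_prop) _ _ (mul_zero η)).mono_left nhdsWithin_le_nhds
    · filter_upwards [self_mem_nhdsWithin] with r hr using mul_pos hη hr
  have hmem : ∀ᶠ q in 𝓝[>] (0 : ℝ) ×ˢ 𝓟 S, z ∈ closedBall (z + q.1 • q.2) (n * (η * q.1)) := by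
    rw [eventually_prod_principal_iff]
    filter_upwards [self_mem_nhdsWithin] with r (hr : 0 < r) c hc
    rw [mem_closedBall, dist_self_add_right, norm_smul, Real.norm_of_nonneg hr.le]
    nlinarith [hR c hc]
  rw [← tendsto_prod_principal_iff]
  exact hz n _ _ (hradius.comp tendsto_fst) hmem

end Averages

section SupFDeriv

variable {E ι : Type*} [NormedAddCommGroup E] [NormedSpace ℝ E] {f : ι → E → ℝ} {K : ℝ≥0}

/-- The supremum over `i` of the seminorms `v ↦ |D(f i)(z) v|`: the candidate for the metric
differential at `z` of the map with coordinates `f i`. The supremum is finite when the `f i` are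
uniformly Lipschitz; an index with `f i` not differentiable at `z` contributes `0`. -/
noncomputable def supFDeriv (f : ι → E → ℝ) (z : E) : Seminorm ℝ E :=
  ⨆ i, (normSeminorm ℝ ℝ).comp (fderiv ℝ (f i) z).toLinearMap

lemma abs_fderiv_apply_le (hf : ∀ i, LipschitzWith K (f i)) (z v : E) (i : ι) :
    |fderiv ℝ (f i) z v| ≤ K * ‖v‖ :=
  (fderiv ℝ (f i) z).le_of_opNorm_le (norm_fderiv_le_of_lipschitz ℝ (hf i)) v

lemma bddAbove_range_abs_fderiv_apply (hf : ∀ i, LipschitzWith K (f i)) (z v : E) :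
    BddAbove (range fun i => |fderiv ℝ (f i) z v|) :=
  ⟨K * ‖v‖, forall_mem_range.2 (abs_fderiv_apply_le hf z v)⟩

lemma supFDeriv_apply (hf : ∀ i, LipschitzWith K (f i)) (z v : E) :
    supFDeriv f z v = ⨆ i, |fderiv ℝ (f i) z v| :=
  Seminorm.iSup_apply (Seminorm.bddAbove_range_iff.2 (bddAbove_range_abs_fderiv_apply hf z))

lemma abs_fderiv_apply_le_supFDeriv (hf : ∀ i, LipschitzWith K (f i)) (z v : E) (i : ι) :
    |fderiv ℝ (f i) z v| ≤ supFDeriv f z v :=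
  (le_ciSup (bddAbove_range_abs_fderiv_apply hf z v) i).trans_eq (supFDeriv_apply hf z v).symm

lemma supFDeriv_apply_le (hf : ∀ i, LipschitzWith K (f i)) (z v : E) :
    supFDeriv f z v ≤ K * ‖v‖ :=
  (supFDeriv_apply hf z v).trans_le
    (Real.iSup_le (abs_fderiv_apply_le hf z v) (by positivity))

lemma measurable_supFDeriv_apply [Countable ι] [MeasurableSpace E] [OpensMeasurableSpace E]
    (hf : ∀ i, LipschitzWith K (f i)) (v : E) : Measurable fun z => supFDeriv f z v := by
  simp only [supFDeriv_apply hf]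
  exact .iSup fun i => (measurable_fderiv_apply_const ℝ (f i) v).abs

lemma locallyIntegrable_supFDeriv_apply [Countable ι] [MeasurableSpace E] [OpensMeasurableSpace E]
    (μ : Measure E) [IsLocallyFiniteMeasure μ] (hf : ∀ i, LipschitzWith K (f i)) (v : E) :
    LocallyIntegrable (fun z => supFDeriv f z v) μ := by
  refine (locallyIntegrable_const (K * ‖v‖ : ℝ)).mono
    (measurable_supFDeriv_apply hf v).aestronglyMeasurable (.of_forall fun z => ?_)
  rw [Real.norm_of_nonneg (apply_nonneg _ v)]
  exact (supFDeriv_apply_le hf z v).trans (le_abs_self _)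

lemma tendsto_abs_sub_div_of_differentiableAt {f : E → ℝ} {z : E} (hf : DifferentiableAt ℝ f z)
    (a b : E) :
    Tendsto (fun r : ℝ => |f (z + r • b) - f (z + r • a)| / r) (𝓝[>] 0)
      (𝓝 |fderiv ℝ f z (b - a)|) := by
  have hline (c : E) := (hf.hasFDerivAt.hasLineDerivAt c).tendsto_slope_zero_right
  have hdiff := ((hline b).sub (hline a)).abs
  rw [← map_sub] at hdiff
  refine hdiff.congr' ?_
  filter_upwards [self_mem_nhdsWithin] with r (hr : 0 < r)
  rw [← smul_sub, sub_sub_sub_cancel_right, smul_eq_mul, abs_mul, abs_inv, abs_of_pos hr,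
    inv_mul_eq_div]

lemma eventually_exists_supFDeriv_sub_lt [Nonempty ι] (hf : ∀ i, LipschitzWith K (f i)) {z : E}
    (hz : ∀ i, DifferentiableAt ℝ (f i) z) (a b : E) {ε : ℝ} (hε : 0 < ε) :
    ∀ᶠ r in 𝓝[>] (0 : ℝ), ∃ i,
      supFDeriv f z (b - a) - ε < |f i (z + r • b) - f i (z + r • a)| / r := by
  obtain ⟨i, hi⟩ : ∃ i, supFDeriv f z (b - a) - ε < |fderiv ℝ (f i) z (b - a)| :=
    exists_lt_of_lt_ciSup ((sub_lt_self _ hε).trans_eq (supFDeriv_apply hf z _))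
  filter_upwards [(tendsto_abs_sub_div_of_differentiableAt (hz i) a b).eventually_const_lt hi]
    with r hr using ⟨i, hr⟩

variable [FiniteDimensional ℝ E] [MeasurableSpace E] [BorelSpace E] (μ : Measure E)
  [μ.IsAddHaarMeasure]

lemma ae_eventually_abs_sub_le_of_direction [Countable ι] (hf : ∀ i, LipschitzWith K (f i))
    (v : E) :
    ∀ᵐ z ∂μ, ∀ a : E, ∀ ε > 0, ∀ᶠ r in 𝓝[>] (0 : ℝ), ∀ i,
      |f i (z + r • a + r • v) - f i (z + r • a)| ≤ r * (supFDeriv f z v + ε) := by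
  have hint := locallyIntegrable_supFDeriv_apply μ hf v
  filter_upwards [ae_tendstoUniformlyOn_setAverage hint] with z hz a ε hε
  obtain ⟨η, hη, hKη⟩ := exists_pos_mul_lt (half_pos hε) (2 * K : ℝ)
  have hbdd : IsBounded (segment ℝ a (a + v)) := by
    rw [← convexHull_pair]
    exact isBounded_convexHull.2 (toFinite _).isBounded
  filter_upwards [Metric.tendstoUniformlyOn_iff.1 (hz _ hbdd η hη) _ (half_pos hε),
    self_mem_nhdsWithin] with r hr (hr0 : 0 < r) i
  have haverage : ∀ c ∈ segment ℝ (z + r • a) (z + r • a + r • v),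
      ⨍ y in closedBall c (η * r), supFDeriv f y v ∂μ ≤ supFDeriv f z v + ε / 2 := by
    rintro _ ⟨s, t, hs, ht, hst, rfl⟩
    have hc := hr (s • a + t • (a + v)) ⟨s, t, hs, ht, hst, rfl⟩
    have hcentre : z + r • (s • a + t • (a + v))
        = s • (z + r • a) + t • (z + r • a + r • v) := by
      rw [eq_sub_of_add_eq hst]; module
    rw [Real.dist_eq, abs_sub_comm, hcentre] at hc
    linarith [le_of_abs_le hc.le]
  calc |f i (z + r • a + r • v) - f i (z + r • a)|
      ≤ 2 * (K * (η * r)) + r * (supFDeriv f z v + ε / 2) :=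
        abs_sub_le_of_setAverage_le (hf i) hint (abs_fderiv_apply_le_supFDeriv hf · v i)
          (mul_pos hη hr0) hr0.le haverage
    _ = r * (supFDeriv f z v + (2 * K * η + ε / 2)) := by ring
    _ ≤ r * (supFDeriv f z v + ε) := by gcongr; linarith

/-- Both sides are `K`-Lipschitz in the direction, so a countable dense set of directions
suffices. -/
lemma ae_eventually_abs_sub_le [Countable ι] (hf : ∀ i, LipschitzWith K (f i)) :
    ∀ᵐ z ∂μ, ∀ a b : E, ∀ ε > 0, ∀ᶠ r in 𝓝[>] (0 : ℝ), ∀ i,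
      |f i (z + r • b) - f i (z + r • a)| ≤ r * (supFDeriv f z (b - a) + ε) := by
  have hdense := ae_all_iff.2 fun n : ℕ =>
    ae_eventually_abs_sub_le_of_direction μ hf (TopologicalSpace.denseSeq E n)
  filter_upwards [hdense] with z hz a b ε hε
  obtain ⟨η, hη, hKη⟩ := exists_pos_mul_lt (half_pos hε) (2 * K : ℝ)
  obtain ⟨n, hn⟩ := (TopologicalSpace.denseRange_denseSeq E).exists_dist_lt (b - a) hη
  set v := TopologicalSpace.denseSeq E n
  rw [dist_eq_norm] at hn
  have hv : supFDeriv f z v ≤ supFDeriv f z (b - a) + K * η :=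
    calc supFDeriv f z v ≤ supFDeriv f z (b - a) + supFDeriv f z (b - a - v) := by
          simpa only [sub_sub_cancel] using map_sub_le_add (supFDeriv f z) (b - a) (b - a - v)
      _ ≤ supFDeriv f z (b - a) + K * η := by
          gcongr
          exact (supFDeriv_apply_le hf z _).trans (by gcongr)
  filter_upwards [hz n a (ε / 2) (half_pos hε), self_mem_nhdsWithin] with r hr (hr0 : 0 < r) i
  have hendpoint : |f i (z + r • b) - f i (z + r • a + r • v)| ≤ K * (r * η) := by
    refine (hf i).norm_sub_le_of_le ?_
    rw [show z + r • b - (z + r • a + r • v) = r • (b - a - v) by module, norm_smul,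
      Real.norm_of_nonneg hr0.le]
    gcongr
  calc |f i (z + r • b) - f i (z + r • a)|
      ≤ |f i (z + r • b) - f i (z + r • a + r • v)|
        + |f i (z + r • a + r • v) - f i (z + r • a)| := abs_sub_le _ _ _
    _ ≤ K * (r * η) + r * (supFDeriv f z (b - a) + K * η + ε / 2) := by
        gcongr
        exact (hr i).trans (by gcongr)
    _ = r * (supFDeriv f z (b - a) + (2 * K * η + ε / 2)) := by ring
    _ ≤ r * (supFDeriv f z (b - a) + ε) := by gcongr; linarith

end SupFDeriv

section MetricDifferential

variable {E X Y ι : Type*} [NormedAddCommGroup E] [NormedSpace ℝ E] [PseudoMetricSpace X]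
  [PseudoMetricSpace Y] {K : ℝ≥0}

/-- The seminorm `N` is the metric differential of `φ` at `z`: the pseudometrics
`(a, b) ↦ dist (φ (z + r • a)) (φ (z + r • b)) / r` converge pointwise to that of `N` as `r → 0⁺`.
Both endpoints move, so this is stronger than the existence of all directional derivatives. -/
def HasMetricDifferentialAt (φ : E → X) (N : Seminorm ℝ E) (z : E) : Prop :=
  ∀ a b : E, Tendsto (fun r : ℝ => dist (φ (z + r • b)) (φ (z + r • a)) / r) (𝓝[>] 0)
    (𝓝 (N (b - a)))

lemma HasMetricDifferentialAt.congr_of_dist_eq {φ : E → X} {ψ : E → Y} {N : Seminorm ℝ E} {z : E}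
    {U : Set E} (hφ : HasMetricDifferentialAt φ N z) (hU : U ∈ 𝓝 z)
    (hdist : ∀ x ∈ U, ∀ y ∈ U, dist (φ x) (φ y) = dist (ψ x) (ψ y)) :
    HasMetricDifferentialAt ψ N z := by
  have hmem (c : E) : ∀ᶠ r in 𝓝[>] (0 : ℝ), z + r • c ∈ U := by
    have hlim : Tendsto (fun r : ℝ => z + r • c) (𝓝 0) (𝓝 z) :=
      Continuous.tendsto' (by fun_prop) _ _ (by simp)
    exact (hlim.eventually hU).filter_mono nhdsWithin_le_nhds
  intro a b
  refine (hφ a b).congr' ?_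
  filter_upwards [hmem a, hmem b] with r ha hb
  rw [hdist _ hb _ ha]

variable [FiniteDimensional ℝ E] [MeasurableSpace E] [BorelSpace E] (μ : Measure E)
  [μ.IsAddHaarMeasure]

lemma ae_hasMetricDifferentialAt_of_lp_infty [Countable ι] [Nonempty ι] {g : E → ℓ^∞(ι, ℝ)}
    (hg : LipschitzWith K g) :
    ∀ᵐ z ∂μ, HasMetricDifferentialAt g (supFDeriv (fun i x => g x i) z) z := by
  have hcoord (i : ι) : LipschitzWith K fun x => g x i := .of_dist_le_mul fun x y =>
    (lp.norm_apply_le_norm ENNReal.top_ne_zero (g x - g y) i).trans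
      ((dist_eq_norm (g x) (g y)).symm.trans_le (hg.dist_le_mul x y))
  have hdiff : ∀ᵐ z ∂μ, ∀ i, DifferentiableAt ℝ (fun x => g x i) z :=
    ae_all_iff.2 fun i => (hcoord i).ae_differentiableAt
  filter_upwards [hdiff, ae_eventually_abs_sub_le μ hcoord] with z hz hupper a b
  refine tendsto_order.2 ⟨fun L hL => ?_, fun L hL => ?_⟩
  · filter_upwards [eventually_exists_supFDeriv_sub_lt hcoord hz a b (sub_pos.2 hL),
      self_mem_nhdsWithin] with r ⟨i, hi⟩ (hr : 0 < r)
    rw [sub_sub_cancel] at hi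
    rw [dist_eq_norm]
    exact hi.trans_le (by
      gcongr
      exact lp.norm_apply_le_norm ENNReal.top_ne_zero (g (z + r • b) - g (z + r • a)) i)
  · filter_upwards [hupper a b _ (half_pos (sub_pos.2 hL)), self_mem_nhdsWithin] with r hr
      (hr0 : 0 < r)
    rw [dist_eq_norm, div_lt_iff₀' hr0]
    calc ‖g (z + r • b) - g (z + r • a)‖ ≤ _ := lp.norm_le_of_forall_le' _ hr
      _ < r * L := by gcongr; linarith

end MetricDifferential

lemma exists_lipschitzWith_lp_infty_dist_eq {E X : Type*} [PseudoMetricSpace E]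
    [TopologicalSpace.SeparableSpace E] [MetricSpace X] {U : Set E} {φ : E → X} {K : ℝ≥0}
    (hφ : LipschitzOnWith K φ U) :
    ∃ g : E → ℓ^∞(ℕ, ℝ), LipschitzWith K g ∧
      ∀ x ∈ U, ∀ y ∈ U, dist (g x) (g y) = dist (φ x) (φ y) := by
  have hsep : TopologicalSpace.IsSeparable (φ '' U) :=
    hφ.continuousOn.isSeparable_image (.of_separableSpace U)
  have := hsep.separableSpace
  obtain ⟨ψ, hψ⟩ := KuratowskiEmbedding.exists_isometric_embedding (φ '' U)
  set g₀ : E → ℓ^∞(ℕ, ℝ) := fun x => Function.extend Subtype.val ψ 0 (φ x)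
  have hg₀ : ∀ x ∈ U, ∀ y ∈ U, dist (g₀ x) (g₀ y) = dist (φ x) (φ y) := fun x hx y hy => by
    have hext {x : E} (hx : x ∈ U) : g₀ x = ψ ⟨φ x, mem_image_of_mem φ hx⟩ :=
      Subtype.val_injective.extend_apply ψ 0 ⟨φ x, mem_image_of_mem φ hx⟩
    rw [hext hx, hext hy, hψ.dist_eq, Subtype.dist_eq]
  have hlip : LipschitzOnWith K g₀ U := .of_dist_le_mul fun x hx y hy =>
    (hg₀ x hx y hy).trans_le (hφ.dist_le_mul x hx y hy)
  obtain ⟨g, hg, hext⟩ := hlip.extend_lp_infty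
  exact ⟨g, hg, fun x hx y hy => by rw [← hext hx, ← hext hy, hg₀ x hx y hy]⟩

theorem ae_exists_hasMetricDifferentialAt {E X : Type*} [NormedAddCommGroup E] [NormedSpace ℝ E]
    [FiniteDimensional ℝ E] [MeasurableSpace E] [BorelSpace E] (μ : Measure E)
    [μ.IsAddHaarMeasure] [MetricSpace X] {U : Set E} (hU : IsOpen U) {φ : E → X} {K : ℝ≥0}
    (hφ : LipschitzOnWith K φ U) :
    ∀ᵐ z ∂μ.restrict U, ∃ N : Seminorm ℝ E, HasMetricDifferentialAt φ N z := by
  obtain ⟨g, hg, hdist⟩ := exists_lipschitzWith_lp_infty_dist_eq hφ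
  filter_upwards [ae_restrict_mem hU.measurableSet,
    ae_restrict_of_ae (ae_hasMetricDifferentialAt_of_lp_infty μ hg)] with z hzU hz
  exact ⟨_, hz.congr_of_dist_eq (hU.mem_nhds hzU) hdist⟩

section Diamond

variable {X : Type*} [MetricSpace X]

lemma IsGeodesicSpace.exists_dist_eq (hX : IsGeodesicSpace X) (x y : X) {t : ℝ} (ht : 0 ≤ t)
    (hty : t ≤ dist x y) : ∃ p, dist p x = t ∧ dist p y = dist x y - t := by
  obtain ⟨c, hc0, hc1, hc⟩ := hX x y
  rcases ht.eq_or_lt with rfl | ht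
  · exact ⟨x, by simp⟩
  have hd : 0 < dist x y := ht.trans_le hty
  have hs : t / dist x y ∈ Icc (0 : ℝ) 1 := ⟨by positivity, (div_le_one hd).2 hty⟩
  have hx := hc _ hs 0 (left_mem_Icc.2 zero_le_one)
  have hy := hc _ hs 1 (right_mem_Icc.2 zero_le_one)
  rw [hc0, sub_zero, abs_of_nonneg hs.1, mul_div_cancel₀ _ hd.ne'] at hx
  rw [hc1, abs_sub_comm, abs_of_nonneg (sub_nonneg.2 hs.2), mul_sub, mul_one,
    mul_div_cancel₀ _ hd.ne'] at hy
  exact ⟨_, hx, hy⟩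

/-- Test the inclusion on the centre `z` and on the point at distance `ν` from `z` towards `x₂`. -/
lemma IsGeodesicSpace.le_of_closedBall_subset_inter (hX : IsGeodesicSpace X) {x₁ x₂ z : X}
    {R₁ R₂ ν : ℝ} (hν : 0 ≤ ν) (hR₁ : R₁ < dist x₁ x₂)
    (hsub : closedBall z ν ⊆ closedBall x₁ R₁ ∩ closedBall x₂ R₂) :
    ν ≤ R₁ + R₂ - dist x₁ x₂ := by
  have hball {p : X} (hp : dist p z ≤ ν) : dist p x₁ ≤ R₁ ∧ dist p x₂ ≤ R₂ := hsub hp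
  have hνz : ν ≤ dist z x₂ := by
    by_contra! hlt
    have := (hball (p := x₂) (by rw [dist_comm]; exact hlt.le)).1
    rw [dist_comm] at this
    linarith
  obtain ⟨p, hpz, hpx₂⟩ := hX.exists_dist_eq z x₂ hν hνz
  have h1 := (hball hpz.le).1
  have h2 := (hball (p := z) (by simpa using hν)).2
  have := dist_triangle_left x₁ x₂ p
  linarith

lemma HasDiamondProperty.dist_le {lam : ℝ} (hdia : HasDiamondProperty X lam)
    (hX : IsGeodesicSpace X) {x₁ x₂ p q : X} {R₁ R₂ : ℝ} (hR₁ : R₁ < dist x₁ x₂)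
    (hp : p ∈ closedBall x₁ R₁ ∩ closedBall x₂ R₂) (hq : q ∈ closedBall x₁ R₁ ∩ closedBall x₂ R₂) :
    dist q p ≤ 2 * |lam| * (R₁ + R₂ - dist x₁ x₂) := by
  obtain ⟨z, z', ν, hν, hinner, houter⟩ := hdia x₁ x₂ R₁ R₂ ⟨p, hp⟩
  calc dist q p ≤ dist q z' + dist p z' := dist_triangle_right _ _ _
    _ ≤ lam * ν + lam * ν := add_le_add (houter hq) (houter hp)
    _ = 2 * lam * ν := by ring
    _ ≤ 2 * |lam| * (R₁ + R₂ - dist x₁ x₂) := by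
      gcongr
      · exact le_abs_self lam
      · exact hX.le_of_closedBall_subset_inter hν hR₁ hinner

end Diamond

section BlowUp

variable {E X : Type*} [NormedAddCommGroup E] [NormedSpace ℝ E] {N : Seminorm ℝ E}

lemma HasMetricDifferentialAt.eventually_dist_lt [PseudoMetricSpace X] {φ : E → X} {z : E}
    (hφ : HasMetricDifferentialAt φ N z) {a b : E} {R : ℝ} (hR : N (b - a) < R) :
    ∀ᶠ r in 𝓝[>] (0 : ℝ), dist (φ (z + r • b)) (φ (z + r • a)) < r * R := by
  filter_upwards [(hφ a b).eventually_lt_const hR, self_mem_nhdsWithin] with r hr (hr0 : 0 < r)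
  exact (div_lt_iff₀' hr0).1 hr

variable [MetricSpace X] {φ : E → X} {z : E} {lam : ℝ}

lemma HasMetricDifferentialAt.le_of_diamond (hφ : HasMetricDifferentialAt φ N z)
    (hX : IsGeodesicSpace X) (hdia : HasDiamondProperty X lam) {a b p q : E} {R : ℝ}
    (hpa : N (p - a) < R) (hpb : N (p - b) < R) (hqa : N (q - a) < R) (hqb : N (q - b) < R)
    (hR : R < N (b - a)) :
    N (q - p) ≤ 2 * |lam| * (2 * R - N (b - a)) := by
  refine le_of_tendsto_of_tendsto (hφ p q)
    (((tendsto_const_nhds (x := 2 * R)).sub (hφ a b)).const_mul (2 * |lam|)) ?_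
  filter_upwards [hφ.eventually_dist_lt hpa, hφ.eventually_dist_lt hpb, hφ.eventually_dist_lt hqa,
    hφ.eventually_dist_lt hqb, (hφ a b).eventually_const_lt hR, self_mem_nhdsWithin]
    with r hpa hpb hqa hqb hR (hr : 0 < r)
  rw [lt_div_iff₀' hr] at hR
  rw [div_le_iff₀ hr]
  calc _ ≤ 2 * |lam| * (r * R + r * R - dist (φ (z + r • b)) (φ (z + r • a))) :=
        hdia.dist_le hX hR ⟨hpb.le, hpa.le⟩ ⟨hqb.le, hqa.le⟩
    _ = _ := by field_simp; ring

lemma eventually_seminorm_add_smul_lt {v w : E} (hNv : DifferentiableAt ℝ N v)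
    (hw : fderiv ℝ N v w = 0) {ε : ℝ} (hε : 0 < ε) :
    ∀ᶠ t in 𝓝[>] (0 : ℝ), N (v + t • w) < N v + ε * t := by
  have hslope := (hNv.hasFDerivAt.hasLineDerivAt w).tendsto_slope_zero_right
  rw [hw] at hslope
  filter_upwards [hslope.eventually_lt_const hε, self_mem_nhdsWithin] with t ht (ht0 : 0 < t)
  rw [smul_eq_mul, inv_mul_lt_iff₀ ht0] at ht
  linarith

/-- The balls of radius `N v + ε * t` about `± v` overlap by `2 * ε * t`, yet contain both `0` and
`t • w`. -/
lemma HasMetricDifferentialAt.eq_zero_of_fderiv_eq_zero (hφ : HasMetricDifferentialAt φ N z)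
    (hX : IsGeodesicSpace X) (hdia : HasDiamondProperty X lam) {v w : E} (hv : 0 < N v)
    (hNv : DifferentiableAt ℝ N v) (hw : fderiv ℝ N v w = 0) : N w = 0 := by
  have hwneg : fderiv ℝ N v (-w) = 0 := by rw [map_neg, hw, neg_zero]
  have hvv : N (v - -v) = 2 * N v := by
    rw [sub_neg_eq_add, ← two_smul ℝ v, map_smul_eq_mul, Real.norm_two]
  have hbound : ∀ ε > 0, N w ≤ 4 * |lam| * ε := fun ε hε => by
    have hsmall : ∀ᶠ t in 𝓝[>] (0 : ℝ), N v + ε * t < N (v - -v) := by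
      have hlim : Tendsto (fun t : ℝ => N v + ε * t) (𝓝 0) (𝓝 (N v)) :=
        Continuous.tendsto' (by fun_prop) _ _ (by simp)
      exact (hlim.eventually_lt_const (by linarith)).filter_mono nhdsWithin_le_nhds
    obtain ⟨t, htw, htwneg, htv, ht : 0 < t⟩ := ((eventually_seminorm_add_smul_lt hNv hw hε).and
      ((eventually_seminorm_add_smul_lt hNv hwneg hε).and
        (hsmall.and self_mem_nhdsWithin))).exists
    have hεt : 0 < ε * t := mul_pos hε ht
    have htN : N (t • w - 0) ≤ 2 * |lam| * (2 * (N v + ε * t) - N (v - -v)) :=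
      hφ.le_of_diamond hX hdia (by simpa using hεt) (by simpa [map_neg_eq_map] using hεt)
        (by rwa [sub_neg_eq_add, add_comm]) (by rwa [map_sub_rev, sub_eq_add_neg, ← smul_neg]) htv
    rw [sub_zero, map_smul_eq_mul, Real.norm_of_nonneg ht.le, hvv] at htN
    nlinarith
  have hlim : Tendsto (fun ε : ℝ => 4 * |lam| * ε) (𝓝[>] 0) (𝓝 0) :=
    (Continuous.tendsto' (by fun_prop) _ _ (mul_zero _)).mono_left nhdsWithin_le_nhds
  exact (ge_of_tendsto hlim (eventually_mem_nhdsWithin.mono hbound)).antisymm (apply_nonneg N w)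

end BlowUp

section Seminorm

variable {E : Type*} [NormedAddCommGroup E] [NormedSpace ℝ E] {N : Seminorm ℝ E}

lemma seminorm_eq_abs_of_ker_le {ℓ : E →L[ℝ] ℝ} {v : E} (hℓv : ℓ v ≠ 0)
    (hker : ∀ w, ℓ w = 0 → N w = 0) :
    N = (normSeminorm ℝ ℝ).comp ((N v / ℓ v) • ℓ).toLinearMap := by
  ext w
  have hw : N (w - (ℓ w / ℓ v) • v) = 0 := hker _ (by simp [hℓv])
  calc N w = N ((ℓ w / ℓ v) • v) :=
        sub_eq_zero.1 (abs_nonpos_iff.1 ((abs_sub_map_le_sub N _ _).trans_eq hw))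
    _ = |ℓ w / ℓ v| * |N v| := by
        rw [map_smul_eq_mul, Real.norm_eq_abs, abs_of_nonneg (apply_nonneg N v)]
    _ = |N v / ℓ v * ℓ w| := by rw [← abs_mul]; ring_nf

variable [FiniteDimensional ℝ E]

lemma continuous_seminorm_of_finiteDimensional (N : Seminorm ℝ E) : Continuous N :=
  N.convexOn.locallyLipschitz.continuous

lemma dense_differentiableAt_seminorm (N : Seminorm ℝ E) : Dense {v | DifferentiableAt ℝ N v} := by
  obtain ⟨C, hC, hNC⟩ :=
    Seminorm.bound_of_continuous_normedSpace N (continuous_seminorm_of_finiteDimensional N)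
  have hlip : LipschitzWith ⟨C, hC.le⟩ N := .of_dist_le_mul fun x y => by
    rw [Real.dist_eq, dist_eq_norm]
    exact (abs_sub_map_le_sub N x y).trans (hNC _)
  borelize E
  exact Measure.dense_of_ae (hlip.ae_differentiableAt (μ := Measure.addHaar))

end Seminorm

lemma HasMetricDifferentialAt.exists_eq_abs_of_diamond {E X : Type*} [NormedAddCommGroup E]
    [NormedSpace ℝ E] [FiniteDimensional ℝ E] [MetricSpace X] {φ : E → X} {N : Seminorm ℝ E}
    {z : E} {lam : ℝ} (hφ : HasMetricDifferentialAt φ N z) (hX : IsGeodesicSpace X)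
    (hdia : HasDiamondProperty X lam) :
    ∃ ℓ : E →L[ℝ] ℝ, N = (normSeminorm ℝ ℝ).comp ℓ.toLinearMap := by
  by_cases hN : ∀ v, N v = 0
  · exact ⟨0, by ext v; simp [hN v]⟩
  obtain ⟨v₀, hv₀⟩ := not_forall.1 hN
  obtain ⟨v, hv : 0 < N v, hNv : DifferentiableAt ℝ N v⟩ :=
    (dense_differentiableAt_seminorm N).inter_open_nonempty {v | 0 < N v}
      (isOpen_lt continuous_const (continuous_seminorm_of_finiteDimensional N))
      ⟨v₀, (apply_nonneg N v₀).lt_of_ne' hv₀⟩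
  have hker (w : E) : fderiv ℝ N v w = 0 → N w = 0 :=
    hφ.eq_zero_of_fderiv_eq_zero hX hdia hv hNv
  exact ⟨_, seminorm_eq_abs_of_ker_le (fun h => hv.ne' (hker v h)) hker⟩

theorem md_degenerate_of_diamond_general {E X : Type*} [NormedAddCommGroup E] [NormedSpace ℝ E]
    [FiniteDimensional ℝ E] [MeasurableSpace E] [BorelSpace E] (μ : Measure E)
    [μ.IsAddHaarMeasure] [MetricSpace X] {lam : ℝ} (hX : IsGeodesicSpace X)
    (hdia : HasDiamondProperty X lam) {U : Set E} (hU : IsOpen U) {φ : E → X} {K : ℝ≥0}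
    (hφ : LipschitzOnWith K φ U) :
    ∀ᵐ z ∂μ.restrict U, ∃ ℓ : E →L[ℝ] ℝ,
      HasMetricDifferentialAt φ ((normSeminorm ℝ ℝ).comp ℓ.toLinearMap) z := by
  filter_upwards [ae_exists_hasMetricDifferentialAt μ hU hφ] with z ⟨N, hN⟩
  obtain ⟨ℓ, rfl⟩ := hN.exists_eq_abs_of_diamond hX hdia
  exact ⟨ℓ, hN⟩

lemma HasMetricDifferentialAt.hasMDDerivAt {X : Type*} [MetricSpace X] {k : ℕ}
    {φ : EuclideanSpace ℝ (Fin k) → X} {N : Seminorm ℝ (EuclideanSpace ℝ (Fin k))}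
    {z : EuclideanSpace ℝ (Fin k)} (hφ : HasMetricDifferentialAt φ N z)
    (v : EuclideanSpace ℝ (Fin k)) : HasMDDerivAt φ z v (N v) := by
  simpa only [HasMDDerivAt, smul_zero, add_zero, sub_zero] using hφ 0 v

theorem md_degenerate_of_diamond {X : Type*} [MetricSpace X] (lam : ℝ) (hlam : 1 ≤ lam)
    (hgeo : IsGeodesicSpace X) (hdia : HasDiamondProperty X lam)
    (U : Set (EuclideanSpace ℝ (Fin 2))) (hU : IsOpen U)
    (φ : EuclideanSpace ℝ (Fin 2) → X) (K : NNReal) (hφ : LipschitzOnWith K φ U) :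
    ∀ᵐ z ∂(MeasureTheory.volume.restrict U),
      (∀ v, ∃ L, HasMDDerivAt φ z v L) ∧ ∃ v ≠ 0, HasMDDerivAt φ z v 0 := by
  filter_upwards [md_degenerate_of_diamond_general volume hgeo hdia hU hφ] with z ⟨ℓ, hℓ⟩
  obtain ⟨v, hv, hv0⟩ := ℓ.toLinearMap.ker.ne_bot_iff.1
    (LinearMap.ker_ne_bot_of_finrank_lt (by simp))
  refine ⟨fun w => ⟨_, hℓ.hasMDDerivAt w⟩, v, hv0, ?_⟩
  have hlim := hℓ.hasMDDerivAt v
  rwa [Seminorm.comp_apply, LinearMap.mem_ker.1 hv, map_zero] at hlim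
end

section
/- Let (X,d) be a metric space, U ⊆ ℝᵏ open, and φ : U → X a Lipschitz map. Then for almost every z ∈ U the metric directional derivative md φ_z(v) exists for every v ∈ ℝᵏ. Furthermore, there are compact sets K_i ⊆ U, i ∈ ℕ, such that the Lebesgue measure of U \ ∪ᵢ K_i is zero and such that for every i and every ε > 0 there exists r(K_i, ε) > 0 with |d(φ(z+v), φ(z+w)) − md φ_z(v−w)| ≤ ε|v−w| for all z ∈ K_i and all v, w ∈ ℝᵏ satisfying |v|, |w| ≤ r(K_i, ε) and z + w ∈ K_i. -/
/-!
For a Lipschitz curve `γ`, the functions `dist (γ ·) (γ q)` with `q` rational are differentiable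
almost everywhere, and the supremum `m` of the absolute values of their derivatives satisfies
`dist (γ t) (γ s) ≤ ∫ u in s..t, m u`. Lebesgue differentiation then shows that `γ` has metric speed
`m` almost everywhere. By Fubini along parallel lines, a Lipschitz map on a finite-dimensional space
has a metric directional derivative in any fixed direction at almost every point; its difference
quotients are equi-Lipschitz in the direction, so countably many directions suffice.

Seen as functions of the base point with values in the continuous functions on the unit sphere, the
difference quotients converge almost everywhere, hence by Egorov uniformly on compact sets that
exhaust the domain up to a null set, and their limit is continuous there. Applying this at the base
point `z + w`, in direction `(v - w) / ‖v - w‖` and at radius `‖v - w‖`, gives the two-point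
estimate.

A map that is Lipschitz on a subset only is replaced by the extension of its Kuratowski embedding.
-/

open Filter Topology MeasureTheory Metric Set
open scoped NNReal ENNReal

section Curve

variable {X : Type*} [PseudoMetricSpace X] {γ : ℝ → X} {C : ℝ≥0}

/-- The metric speed of a Lipschitz curve `γ`: at almost every `t`, the limit of
`dist (γ (t + r)) (γ t) / r` as `r → 0⁺`. It is encoded as the supremum of the speeds of the real
functions `dist (γ ·) (γ q)`, `q ∈ ℚ`, which determine the distances along a continuous curve. -/
noncomputable def metricSpeed (γ : ℝ → X) (t : ℝ) : ℝ :=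
  ⨆ q : ℚ, |deriv (fun s => dist (γ s) (γ q)) t|

lemma lipschitzWith_dist_curve (hγ : LipschitzWith C γ) (x : X) :
    LipschitzWith C fun s => dist (γ s) x := by
  simpa [Function.comp_def] using (LipschitzWith.dist_left x).comp hγ

lemma abs_deriv_dist_curve_le (hγ : LipschitzWith C γ) (x : X) (t : ℝ) :
    |deriv (fun s => dist (γ s) x) t| ≤ C :=
  norm_deriv_le_of_lipschitz (lipschitzWith_dist_curve hγ x)

lemma abs_deriv_dist_le_metricSpeed (hγ : LipschitzWith C γ) (q : ℚ) (t : ℝ) :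
    |deriv (fun s => dist (γ s) (γ q)) t| ≤ metricSpeed γ t :=
  le_ciSup (f := fun q : ℚ => |deriv (fun s => dist (γ s) (γ q)) t|)
    ⟨C, forall_mem_range.2 fun q : ℚ => abs_deriv_dist_curve_le hγ (γ q) t⟩ q

lemma metricSpeed_nonneg (γ : ℝ → X) (t : ℝ) : 0 ≤ metricSpeed γ t :=
  Real.iSup_nonneg fun _ => abs_nonneg _

lemma metricSpeed_le (hγ : LipschitzWith C γ) (t : ℝ) : metricSpeed γ t ≤ C :=
  ciSup_le fun q : ℚ => abs_deriv_dist_curve_le hγ (γ q) t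

lemma measurable_metricSpeed (γ : ℝ → X) : Measurable (metricSpeed γ) :=
  Measurable.iSup fun _ => (measurable_deriv _).abs

lemma locallyIntegrable_metricSpeed (hγ : LipschitzWith C γ) :
    LocallyIntegrable (metricSpeed γ) := by
  refine (locallyIntegrable_const (C : ℝ)).mono (measurable_metricSpeed γ).aestronglyMeasurable
    (Eventually.of_forall fun t => ?_)
  simpa [abs_of_nonneg (metricSpeed_nonneg γ t)] using metricSpeed_le hγ t

lemma intervalIntegrable_metricSpeed (hγ : LipschitzWith C γ) (a b : ℝ) :
    IntervalIntegrable (metricSpeed γ) volume a b :=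
  ((locallyIntegrable_metricSpeed hγ).integrableOn_isCompact isCompact_uIcc).intervalIntegrable

lemma dist_le_integral_metricSpeed (hγ : LipschitzWith C γ) {s t : ℝ} (hst : s ≤ t) :
    dist (γ t) (γ s) ≤ ∫ u in s..t, metricSpeed γ u := by
  have increment_le : ∀ σ : ℝ,
      dist (γ t) (γ σ) - dist (γ s) (γ σ) ≤ ∫ u in s..t, metricSpeed γ u := fun σ => by
    have hγc := hγ.continuous
    refine Rat.denseRange_cast.induction_on (p := fun σ : ℝ =>
      dist (γ t) (γ σ) - dist (γ s) (γ σ) ≤ ∫ u in s..t, metricSpeed γ u) σ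
      (isClosed_le (by fun_prop) continuous_const) fun q => ?_
    have hac : AbsolutelyContinuousOnInterval (fun u => dist (γ u) (γ q)) s t :=
      (lipschitzWith_dist_curve hγ (γ q)).lipschitzOnWith.absolutelyContinuousOnInterval
    rw [← hac.integral_deriv_eq_sub]
    exact intervalIntegral.integral_mono_on hst hac.intervalIntegrable_deriv
      (intervalIntegrable_metricSpeed hγ s t)
      fun u _ => (le_abs_self _).trans (abs_deriv_dist_le_metricSpeed hγ q u)
  simpa using increment_le s

theorem ae_tendsto_metricSpeed (hγ : LipschitzWith C γ) :
    ∀ᵐ t, Tendsto (fun r => dist (γ (t + r)) (γ t) / r) (𝓝[>] 0) (𝓝 (metricSpeed γ t)) := by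
  have hdiff : ∀ᵐ t, ∀ q : ℚ, DifferentiableAt ℝ (fun s => dist (γ s) (γ q)) t :=
    ae_all_iff.2 fun q => (lipschitzWith_dist_curve hγ (γ q)).ae_differentiableAt_real
  filter_upwards [hdiff,
    LocallyIntegrable.ae_hasDerivAt_integral (locallyIntegrable_metricSpeed hγ)] with t ht hint
  refine tendsto_order.2 ⟨fun a ha => ?_, fun a ha => ?_⟩
  · obtain ⟨q, hq⟩ := exists_lt_of_lt_ciSup ha
    have hslope := (ht q).hasDerivAt.tendsto_slope_zero_right.abs
    filter_upwards [hslope.eventually (lt_mem_nhds hq), self_mem_nhdsWithin] with r hr hr0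
    refine hr.trans_le ?_
    rw [smul_eq_mul, abs_mul, abs_of_pos (inv_pos.2 hr0), inv_mul_eq_div]
    exact div_le_div_of_nonneg_right (abs_dist_sub_le _ _ _) (le_of_lt hr0)
  · filter_upwards [(hint 0).tendsto_slope_zero_right.eventually (gt_mem_nhds ha),
      self_mem_nhdsWithin] with r hr hr0
    refine lt_of_le_of_lt ?_ hr
    rw [smul_eq_mul, inv_mul_eq_div, intervalIntegral.integral_interval_sub_left
      (intervalIntegrable_metricSpeed hγ _ _) (intervalIntegrable_metricSpeed hγ _ _)]
    exact div_le_div_of_nonneg_right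
      (dist_le_integral_metricSpeed hγ (le_add_of_nonneg_right (le_of_lt hr0))) (le_of_lt hr0)

end Curve

section Convergence

lemma exists_tendsto_of_dense {ι β α : Type*} [UniformSpace β] [UniformSpace α] [CompleteSpace α]
    {l : Filter ι} [l.NeBot] {F : ι → β → α} (hF : UniformEquicontinuous F) {s : Set β}
    (hs : Dense s) (h : ∀ x ∈ s, ∃ a, Tendsto (F · x) l (𝓝 a)) (x : β) :
    ∃ a, Tendsto (F · x) l (𝓝 a) := by
  obtain ⟨y, hy⟩ := hs.nonempty_iff.2 ⟨x⟩
  have : Nonempty α := ⟨(h y hy).choose⟩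
  choose! f hf using h
  have hfs : UniformContinuousOn f s :=
    Tendsto.uniformContinuousOn_of_uniformEquicontinuousOn hf (hF.uniformEquicontinuousOn s)
  have : (𝓝[s] x).NeBot := mem_closure_iff_nhdsWithin_neBot.1 (hs x)
  have hcauchy : Cauchy (𝓝[s] x) := cauchy_nhds.mono nhdsWithin_le_nhds
  obtain ⟨a, ha⟩ := CompleteSpace.complete (hcauchy.map_of_le hfs inf_le_right)
  exact ⟨a, (hF.equicontinuous x).tendsto_of_mem_closure ha hf (hs x)⟩

lemma exists_tendsto_continuousMap {ι S α : Type*} [TopologicalSpace S] [CompactSpace S]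
    [UniformSpace α] {l : Filter ι} [l.NeBot] {F : ι → C(S, α)}
    (hF : Equicontinuous fun i => ⇑(F i)) (h : ∀ x, ∃ a, Tendsto (F · x) l (𝓝 a)) :
    ∃ f, Tendsto F l (𝓝 f) := by
  choose f hf using h
  have hlim : Tendsto (fun i => ⇑(F i)) l (𝓝 f) := tendsto_pi_nhds.2 hf
  refine ⟨⟨f, hlim.continuous_of_equicontinuous hF⟩, ?_⟩
  rw [ContinuousMap.tendsto_iff_tendstoUniformly]
  exact UniformFun.tendsto_iff_tendstoUniformly.1 ((hF.tendsto_uniformFun_iff_pi l f).2 hlim)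

lemma tendstoUniformlyOn_nhdsGT_zero_of_nat {α β : Type*} [PseudoMetricSpace β] {F : ℝ → α → β}
    {g : α → β} {s : Set α} {c : ℝ}
    (hF : ∀ r > 0, ∀ t > 0, ∀ x ∈ s, dist (F r x) (F t x) ≤ c * |r / t - 1|)
    (h : TendstoUniformlyOn (fun n : ℕ => F (n : ℝ)⁻¹) g atTop s) :
    TendstoUniformlyOn F g (𝓝[>] 0) s := by
  have hfloor : Tendsto (fun r : ℝ => ⌊r⁻¹⌋₊) (𝓝[>] 0) atTop :=
    tendsto_nat_floor_atTop.comp tendsto_inv_nhdsGT_zero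
  have hratio : Tendsto (fun r : ℝ => c * |r * ⌊r⁻¹⌋₊ - 1|) (𝓝[>] 0) (𝓝 0) := by
    have := tendsto_nat_floor_div_atTop.comp (tendsto_inv_nhdsGT_zero (𝕜 := ℝ))
    simpa [Function.comp_def, mul_comm] using ((this.sub_const 1).abs.const_mul c)
  rw [Metric.tendstoUniformlyOn_iff] at h ⊢
  intro ε hε
  filter_upwards [hfloor.eventually (h (ε / 2) (half_pos hε)),
    hratio.eventually (gt_mem_nhds (half_pos hε)), hfloor.eventually (eventually_gt_atTop 0),
    self_mem_nhdsWithin] with r hseq hsmall hpos hr x hx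
  have hstep := hF r hr (⌊r⁻¹⌋₊ : ℝ)⁻¹ (by positivity) x hx
  rw [div_inv_eq_mul] at hstep
  linarith [hseq x hx, dist_triangle_right (g x) (F r x) (F (⌊r⁻¹⌋₊ : ℝ)⁻¹ x)]

lemma tendsto_nhdsGT_zero_of_nat {β : Type*} [PseudoMetricSpace β] {f : ℝ → β} {a : β} {c : ℝ}
    (hf : ∀ r > 0, ∀ t > 0, dist (f r) (f t) ≤ c * |r / t - 1|)
    (h : Tendsto (fun n : ℕ => f (n : ℝ)⁻¹) atTop (𝓝 a)) : Tendsto f (𝓝[>] 0) (𝓝 a) :=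
  tendstoUniformlyOn_singleton_iff_tendsto (x := ()) (f := fun _ => a).1 <|
    tendstoUniformlyOn_nhdsGT_zero_of_nat (F := fun r _ => f r)
      (fun r hr t ht _ _ => hf r hr t ht) (tendstoUniformlyOn_singleton_iff_tendsto.2 h)

variable {α β : Type*} [MeasurableSpace α] [TopologicalSpace α] [OpensMeasurableSpace α] [T2Space α]
  [PseudoMetricSpace β] {μ : Measure α} [μ.InnerRegularCompactLTTop] {A : Set α} {f : ℕ → α → β}

lemma exists_isCompact_tendstoUniformlyOn (hA : MeasurableSet A) (hμA : μ A ≠ ∞)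
    (hf : ∀ n, StronglyMeasurable (f n))
    (h : ∀ᵐ x ∂μ.restrict A, ∃ b, Tendsto (f · x) atTop (𝓝 b)) {ε : ℝ≥0} (hε : 0 < ε) :
    ∃ C ⊆ A, IsCompact C ∧ μ (A \ C) ≤ ε ∧ ∃ g, TendstoUniformlyOn f g atTop C := by
  obtain ⟨g, hg, hfg⟩ := exists_stronglyMeasurable_limit_of_tendsto_ae
    (fun n => (hf n).aestronglyMeasurable) h
  obtain ⟨B, _, hB, hμB, hunif⟩ := tendstoUniformlyOn_of_ae_tendsto hf hg hA hμA
    ((ae_restrict_iff' hA).1 hfg) (half_pos (NNReal.coe_pos.2 hε))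
  obtain ⟨C, hCAB, hC, hμC⟩ := (hA.diff hB).exists_isCompact_sdiff_lt
    (measure_ne_top_of_subset sdiff_subset hμA) (ENNReal.coe_pos.2 (half_pos hε)).ne'
  refine ⟨C, hCAB.trans sdiff_subset, hC, ?_, g, hunif.mono hCAB⟩
  calc μ (A \ C) ≤ μ (B ∪ ((A \ B) \ C)) := measure_mono fun x hx => by
        by_cases hxB : x ∈ B
        exacts [Or.inl hxB, Or.inr ⟨⟨hx.1, hxB⟩, hx.2⟩]
    _ ≤ μ B + μ ((A \ B) \ C) := measure_union_le _ _
    _ ≤ ↑(ε / 2) + ↑(ε / 2) := by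
        refine add_le_add (hμB.trans_eq ?_) hμC.le
        rw [← ENNReal.ofReal_coe_nnreal, NNReal.coe_div, NNReal.coe_two]
    _ = ε := by rw [← ENNReal.coe_add, add_halves]

lemma exists_isCompact_seq_tendstoUniformlyOn [SigmaFinite μ] (hA : MeasurableSet A)
    (hf : ∀ n, StronglyMeasurable (f n))
    (h : ∀ᵐ x ∂μ.restrict A, ∃ b, Tendsto (f · x) atTop (𝓝 b)) :
    ∃ K : ℕ → Set α, (∀ i, IsCompact (K i)) ∧ (∀ i, K i ⊆ A) ∧ μ (A \ ⋃ i, K i) = 0 ∧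
      ∀ i, ∃ g, TendstoUniformlyOn f g atTop (K i) := by
  obtain ⟨ε, hε, hsum⟩ := ENNReal.exists_pos_sum_of_countable one_ne_zero ℕ
  choose K hKA hK hμK hunif using fun i => exists_isCompact_tendstoUniformlyOn
    (hA.inter (measurableSet_spanningSets μ i))
    (measure_ne_top_of_subset inter_subset_right (measure_spanningSets_lt_top μ i).ne) hf
    (ae_mono (Measure.restrict_mono inter_subset_left le_rfl) h) (hε i)
  refine ⟨K, hK, fun i => (hKA i).trans inter_subset_left, ?_, hunif⟩
  -- Borel–Cantelli: almost every point lies in only finitely many of the sets left over.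
  have hfinite := ae_eventually_notMem
    ((ENNReal.tsum_le_tsum hμK).trans_lt (hsum.trans ENNReal.one_lt_top)).ne
  rw [measure_eq_zero_iff_ae_notMem]
  filter_upwards [hfinite] with x hx hxAK
  obtain ⟨i, hxi, hi⟩ := (hx.and (eventually_ge_atTop (spanningSetsIndex μ x))).exists
  exact hxi ⟨⟨hxAK.1, mem_spanningSets_of_index_le μ x hi⟩,
    fun hxK => hxAK.2 (mem_iUnion_of_mem i hxK)⟩

end Convergence

section MetricDirectionalDerivative

variable {E X : Type*} [NormedAddCommGroup E] [NormedSpace ℝ E] [PseudoMetricSpace X]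
  {φ : E → X} {K : ℝ≥0} {z v : E} {L : ℝ}

/-- The metric difference quotient whose limit as `r → 0⁺` is the metric directional derivative
of `φ` at `z` in direction `v`. -/
noncomputable def metricQuotient (φ : E → X) (z v : E) (r : ℝ) : ℝ :=
  dist (φ (z + r • v)) (φ z) / r

/-- `L` is the metric directional derivative of `φ` at `z` in direction `v`, for `φ` defined on
any real normed space; on `EuclideanSpace ℝ (Fin k)` this unfolds to `HasMDDerivAt`. -/
def HasMetricDirDerivAt (φ : E → X) (z v : E) (L : ℝ) : Prop :=
  Tendsto (metricQuotient φ z v) (𝓝[>] 0) (𝓝 L)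

lemma hasMetricDirDerivAt_zero (φ : E → X) (z : E) : HasMetricDirDerivAt φ z 0 0 :=
  tendsto_const_nhds.congr fun r => by simp [metricQuotient]

lemma metricQuotient_smul (φ : E → X) (z v : E) (c r : ℝ) :
    metricQuotient φ z (c • v) r = c * metricQuotient φ z v (r * c) := by
  rcases eq_or_ne c 0 with rfl | hc
  · simp [metricQuotient]
  · rw [metricQuotient, metricQuotient, smul_smul]
    field_simp

lemma HasMetricDirDerivAt.const_smul (h : HasMetricDirDerivAt φ z v L) {c : ℝ} (hc : 0 < c) :
    HasMetricDirDerivAt φ z (c • v) (c * L) := by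
  have hscale : Tendsto (fun r : ℝ => r * c) (𝓝[>] 0) (𝓝[>] 0) :=
    tendsto_nhdsWithin_iff.2 ⟨tendsto_nhdsWithin_of_tendsto_nhds
      ((continuous_mul_const c).tendsto' 0 0 (zero_mul c)),
      eventually_mem_nhdsWithin.mono fun r hr => mul_pos hr hc⟩
  exact ((h.comp hscale).const_mul c).congr fun r => (metricQuotient_smul φ z v c r).symm

lemma hasMetricDirDerivAt_congr {Y : Type*} [PseudoMetricSpace Y] {ψ : E → Y}
    (h : ∀ᶠ y in 𝓝 z, dist (φ y) (φ z) = dist (ψ y) (ψ z)) :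
    HasMetricDirDerivAt φ z v L ↔ HasMetricDirDerivAt ψ z v L := by
  have hline : Tendsto (fun r : ℝ => z + r • v) (𝓝[>] 0) (𝓝 z) :=
    tendsto_nhdsWithin_of_tendsto_nhds (Continuous.tendsto' (by fun_prop) _ _ (by simp))
  refine tendsto_congr' ?_
  filter_upwards [hline.eventually h] with r hr
  rw [metricQuotient, metricQuotient, hr]

lemma continuous_metricQuotient (hφ : Continuous φ) (r : ℝ) :
    Continuous fun p : E × E => metricQuotient φ p.1 p.2 r := by
  unfold metricQuotient
  fun_prop

lemma lipschitzWith_metricQuotient (hφ : LipschitzWith K φ) (z : E) (r : ℝ) :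
    LipschitzWith K fun v => metricQuotient φ z v r := by
  refine LipschitzWith.of_dist_le_mul fun v w => ?_
  rcases eq_or_ne r 0 with rfl | hr
  · simpa [metricQuotient] using by positivity
  rw [Real.dist_eq, metricQuotient, metricQuotient, ← sub_div, abs_div,
    div_le_iff₀ (abs_pos.2 hr)]
  calc |dist (φ (z + r • v)) (φ z) - dist (φ (z + r • w)) (φ z)|
      ≤ dist (φ (z + r • v)) (φ (z + r • w)) := abs_dist_sub_le _ _ _
    _ ≤ K * dist (z + r • v) (z + r • w) := hφ.dist_le_mul _ _
    _ = K * dist v w * |r| := by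
      rw [dist_add_left, dist_smul₀, Real.norm_eq_abs]; ring

lemma abs_metricQuotient_le (hφ : LipschitzWith K φ) (z v : E) (r : ℝ) :
    |metricQuotient φ z v r| ≤ K * ‖v‖ := by
  simpa [metricQuotient, Real.dist_eq, abs_div] using
    (lipschitzWith_metricQuotient hφ z r).dist_le_mul v 0

lemma abs_metricQuotient_sub_le (hφ : LipschitzWith K φ) (z v : E) (r : ℝ) {t : ℝ}
    (ht : 0 < t) :
    |metricQuotient φ z v r - metricQuotient φ z v t| ≤ 2 * K * ‖v‖ * |r / t - 1| := by
  -- Moving from direction `v` to `c • v` at radius `t` amounts to moving from radius `t` to `r`.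
  set c := r / t with hc
  have hrt : metricQuotient φ z (c • v) t = c * metricQuotient φ z v r := by
    rw [metricQuotient_smul, hc, mul_div_cancel₀ _ ht.ne']
  have hdir : |c * metricQuotient φ z v r - metricQuotient φ z v t| ≤ K * ‖v‖ * |c - 1| := by
    have hcv : dist (c • v) v = ‖v‖ * |c - 1| := by
      rw [dist_eq_norm, mul_comm, ← Real.norm_eq_abs, ← norm_smul, sub_smul, one_smul]
    simpa only [hrt, hcv, mul_assoc, Real.dist_eq] using
      (lipschitzWith_metricQuotient hφ z t).dist_le_mul (c • v) v
  calc |metricQuotient φ z v r - metricQuotient φ z v t|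
      = |(c * metricQuotient φ z v r - metricQuotient φ z v t)
          - metricQuotient φ z v r * (c - 1)| := by ring_nf
    _ ≤ |c * metricQuotient φ z v r - metricQuotient φ z v t|
          + |metricQuotient φ z v r| * |c - 1| := (abs_sub _ _).trans_eq (by rw [abs_mul])
    _ ≤ K * ‖v‖ * |c - 1| + K * ‖v‖ * |c - 1| := by
      gcongr
      exact abs_metricQuotient_le hφ z v r
    _ = 2 * K * ‖v‖ * |c - 1| := by ring

lemma hasMetricDirDerivAt_of_nat (hφ : LipschitzWith K φ)
    (h : Tendsto (fun n : ℕ => metricQuotient φ z v (n : ℝ)⁻¹) atTop (𝓝 L)) :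
    HasMetricDirDerivAt φ z v L :=
  tendsto_nhdsGT_zero_of_nat (fun r _ _ ht => abs_metricQuotient_sub_le hφ z v r ht) h

lemma tendsto_inv_natCast_nhdsGT_zero : Tendsto (fun n : ℕ => (n : ℝ)⁻¹) atTop (𝓝[>] 0) :=
  tendsto_inv_atTop_nhdsGT_zero.comp tendsto_natCast_atTop_atTop

section AlmostEverywhere

variable [FiniteDimensional ℝ E] [MeasurableSpace E] [BorelSpace E]
  (μ : Measure E) [μ.IsAddHaarMeasure]

lemma ae_exists_hasMetricDirDerivAt (hφ : LipschitzWith K φ) (v : E) :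
    ∀ᵐ z ∂μ, ∃ L, HasMetricDirDerivAt φ z v L := by
  have hmeas : MeasurableSet
      {z | ∃ L, Tendsto (fun n : ℕ => metricQuotient φ z v (n : ℝ)⁻¹) atTop (𝓝 L)} :=
    measurableSet_exists_tendsto fun n => Continuous.measurable <|
      (continuous_metricQuotient hφ.continuous (n : ℝ)⁻¹).comp (Continuous.prodMk_left v)
  have hline : ∀ y, ∀ᵐ t : ℝ, ∃ L, HasMetricDirDerivAt φ (y + t • v) v L := fun y => by
    have hparam := (ContinuousLinearMap.toSpanSingleton ℝ v).lipschitz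
    have hcurve := hφ.comp ((LipschitzWith.const y).add hparam)
    filter_upwards [ae_tendsto_metricSpeed hcurve] with t ht
    refine ⟨_, ht.congr fun r => ?_⟩
    simp [metricQuotient, add_smul, add_assoc]
  have hseq := ae_mem_of_ae_add_linearMap_mem (LinearMap.toSpanSingleton ℝ E v) volume μ hmeas
    fun y => (hline y).mono fun t ⟨L, hL⟩ => ⟨L, hL.comp tendsto_inv_natCast_nhdsGT_zero⟩
  exact hseq.mono fun z ⟨L, hL⟩ => ⟨L, hasMetricDirDerivAt_of_nat hφ hL⟩

theorem ae_forall_exists_hasMetricDirDerivAt (hφ : LipschitzWith K φ) :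
    ∀ᵐ z ∂μ, ∀ v, ∃ L, HasMetricDirDerivAt φ z v L := by
  have hdense := TopologicalSpace.denseRange_denseSeq E
  filter_upwards [ae_all_iff.2 fun n => ae_exists_hasMetricDirDerivAt μ hφ
    (TopologicalSpace.denseSeq E n)] with z hz
  exact exists_tendsto_of_dense
    (LipschitzWith.uniformEquicontinuous _ K (lipschitzWith_metricQuotient hφ z)) hdense
    (forall_mem_range.2 hz)

end AlmostEverywhere

section SphereQuotient

/-- The metric difference quotients of `φ` at radius `r` in all unit directions, as a continuous
function of the direction depending continuously on the base point. Convergence in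
`C(sphere 0 1, ℝ)` is uniform convergence over all directions. -/
noncomputable def sphereQuotient (φ : C(E, X)) (r : ℝ) : C(E, C(sphere (0 : E) 1, ℝ)) :=
  ContinuousMap.curry ⟨fun p : E × sphere (0 : E) 1 => metricQuotient φ p.1 p.2 r,
    (continuous_metricQuotient φ.continuous r).comp
      (continuous_fst.prodMk (continuous_subtype_val.comp continuous_snd))⟩

@[simp]
lemma sphereQuotient_apply (φ : C(E, X)) (r : ℝ) (z : E) (e : sphere (0 : E) 1) :
    sphereQuotient φ r z e = metricQuotient φ z e r :=
  rfl

variable {φ : C(E, X)} {C : Set E} {G : E → C(sphere (0 : E) 1, ℝ)}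

lemma hasMetricDirDerivAt_of_tendstoUniformlyOn
    (h : TendstoUniformlyOn (fun r => ⇑(sphereQuotient φ r)) G (𝓝[>] 0) C) (hz : z ∈ C)
    (e : sphere (0 : E) 1) : HasMetricDirDerivAt φ z e (G z e) :=
  ((continuous_eval_const e).tendsto (G z)).comp (h.tendsto_at hz)

variable [FiniteDimensional ℝ E]

lemma exists_tendsto_sphereQuotient (hφ : LipschitzWith K φ)
    (h : ∀ v, ∃ L, HasMetricDirDerivAt φ z v L) :
    ∃ g, Tendsto (sphereQuotient φ · z) (𝓝[>] 0) (𝓝 g) := by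
  refine exists_tendsto_continuousMap (UniformEquicontinuous.equicontinuous ?_) fun e => h e
  exact LipschitzWith.uniformEquicontinuous _ (K * 1) fun r =>
    (lipschitzWith_metricQuotient hφ z r).comp (LipschitzWith.subtype_val _)

lemma tendstoUniformlyOn_sphereQuotient_of_nat (hφ : LipschitzWith K φ)
    (h : TendstoUniformlyOn (fun n : ℕ => ⇑(sphereQuotient φ (n : ℝ)⁻¹)) G atTop C) :
    TendstoUniformlyOn (fun r => ⇑(sphereQuotient φ r)) G (𝓝[>] 0) C := by
  refine tendstoUniformlyOn_nhdsGT_zero_of_nat (F := fun r => ⇑(sphereQuotient φ r)) (c := 2 * K)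
    (fun r _ t ht z _ => ?_) h
  refine (ContinuousMap.dist_le (by positivity)).2 fun e => ?_
  simpa [Real.dist_eq] using abs_metricQuotient_sub_le hφ z e r ht

lemma exists_radius_dist_sphereQuotient_lt (hC : IsCompact C)
    (h : TendstoUniformlyOn (fun r => ⇑(sphereQuotient φ r)) G (𝓝[>] 0) C) {ε : ℝ} (hε : 0 < ε) :
    ∃ ρ > 0, ∀ z ∈ C, ∀ y ∈ C, dist y z < ρ → ∀ r ∈ Ioo 0 ρ,
      dist (sphereQuotient φ r y) (G z) < ε := by
  have hG : ContinuousOn G C := h.continuousOn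
    (Eventually.of_forall fun r => (sphereQuotient φ r).continuous.continuousOn).frequently
  obtain ⟨a, ha, hquot⟩ := mem_nhdsGT_iff_exists_Ioo_subset.1
    (Metric.tendstoUniformlyOn_iff.1 h (ε / 2) (half_pos hε))
  obtain ⟨b, hb, hlim⟩ := Metric.uniformContinuousOn_iff.1
    (hC.uniformContinuousOn_of_continuous hG) (ε / 2) (half_pos hε)
  refine ⟨min a b, lt_min ha hb, fun z hz y hy hyz r hr => ?_⟩
  have hquot_r := hquot (Ioo_subset_Ioo_right (min_le_left a b) hr) y hy
  have hlim_yz := hlim y hy z hz (hyz.trans_le (min_le_right a b))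
  linarith [dist_triangle_left (sphereQuotient φ r y) (G z) (G y)]

theorem exists_radius_abs_dist_sub_le (hC : IsCompact C)
    (h : TendstoUniformlyOn (fun r => ⇑(sphereQuotient φ r)) G (𝓝[>] 0) C) {ε : ℝ} (hε : 0 < ε) :
    ∃ r > 0, ∀ z ∈ C, ∀ v w, ‖v‖ ≤ r → ‖w‖ ≤ r → z + w ∈ C →
      ∃ L, HasMetricDirDerivAt φ z (v - w) L ∧
        |dist (φ (z + v)) (φ (z + w)) - L| ≤ ε * ‖v - w‖ := by
  obtain ⟨ρ, hρ, hquot⟩ := exists_radius_dist_sphereQuotient_lt hC h hε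
  refine ⟨ρ / 3, by positivity, fun z hz v w hv hw hzw => ?_⟩
  rcases eq_or_ne v w with rfl | hvw
  · exact ⟨0, by simpa using hasMetricDirDerivAt_zero φ z, by simp⟩
  have hu : 0 < ‖v - w‖ := norm_pos_iff.2 (sub_ne_zero.2 hvw)
  let e : sphere (0 : E) 1 := ⟨‖v - w‖⁻¹ • (v - w), by simp [norm_smul, hu.ne']⟩
  have he : ‖v - w‖ • (e : E) = v - w := smul_inv_smul₀ hu.ne' _
  refine ⟨‖v - w‖ * G z e, ?_, ?_⟩
  · simpa only [he] using (hasMetricDirDerivAt_of_tendstoUniformlyOn h hz e).const_smul hu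
  have hdist : dist (φ (z + v)) (φ (z + w)) = ‖v - w‖ * sphereQuotient φ ‖v - w‖ (z + w) e := by
    rw [sphereQuotient_apply, metricQuotient, he, mul_div_cancel₀ _ hu.ne', add_assoc,
      add_sub_cancel]
  have hlt : dist (sphereQuotient φ ‖v - w‖ (z + w) e) (G z e) < ε :=
    (ContinuousMap.dist_apply_le_dist e).trans_lt <| hquot z hz _ hzw
      (by rw [dist_self_add_left]; linarith) _ ⟨hu, by linarith [norm_sub_le v w]⟩
  rw [hdist, ← mul_sub, abs_mul, abs_norm, mul_comm]
  exact mul_le_mul_of_nonneg_right hlt.le hu.le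

theorem exists_isCompact_seq_tendstoUniformlyOn_sphereQuotient [MeasurableSpace E] [BorelSpace E]
    (μ : Measure E) [μ.IsAddHaarMeasure] (hφ : LipschitzWith K φ) {A : Set E}
    (hA : MeasurableSet A) :
    ∃ Ks : ℕ → Set E, (∀ i, IsCompact (Ks i)) ∧ (∀ i, Ks i ⊆ A) ∧ μ (A \ ⋃ i, Ks i) = 0 ∧
      ∀ i, ∃ G, TendstoUniformlyOn (fun r => ⇑(sphereQuotient φ r)) G (𝓝[>] 0) (Ks i) := by
  have hlim : ∀ᵐ z ∂μ.restrict A,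
      ∃ g, Tendsto (fun n : ℕ => sphereQuotient φ (n : ℝ)⁻¹ z) atTop (𝓝 g) := by
    filter_upwards [ae_restrict_of_ae (ae_forall_exists_hasMetricDirDerivAt μ hφ)] with z hz
    obtain ⟨g, hg⟩ := exists_tendsto_sphereQuotient hφ hz
    exact ⟨g, hg.comp tendsto_inv_natCast_nhdsGT_zero⟩
  obtain ⟨Ks, hKs, hKA, hnull, hunif⟩ := exists_isCompact_seq_tendstoUniformlyOn hA
    (fun n : ℕ => (sphereQuotient φ (n : ℝ)⁻¹).continuous.stronglyMeasurable) hlim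
  exact ⟨Ks, hKs, hKA, hnull,
    fun i => (hunif i).imp fun G hG => tendstoUniformlyOn_sphereQuotient_of_nat hφ hG⟩

end SphereQuotient

end MetricDirectionalDerivative

lemma exists_lipschitzWith_dist_eq {α X : Type*} [PseudoMetricSpace α] [SecondCountableTopology α]
    [PseudoMetricSpace X] {U : Set α} {φ : α → X} {K : ℝ≥0} (hφ : LipschitzOnWith K φ U) :
    ∃ Φ : α → lp (fun _ : ℕ => ℝ) ∞, LipschitzWith K Φ ∧
      ∀ x ∈ U, ∀ y ∈ U, dist (Φ x) (Φ y) = dist (φ x) (φ y) := by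
  let ψ : α → SeparationQuotient X := SeparationQuotient.mk ∘ φ
  have hψ : ContinuousOn ψ U := SeparationQuotient.continuous_mk.comp_continuousOn hφ.continuousOn
  have : TopologicalSpace.SeparableSpace (ψ '' U) := by
    rw [image_eq_range]
    exact (TopologicalSpace.isSeparable_range
      (continuousOn_iff_continuous_domRestrict.1 hψ)).separableSpace
  have hembed := kuratowskiEmbedding.isometry (ψ '' U)
  obtain ⟨f, hf⟩ : ∃ f : α → lp (fun _ : ℕ => ℝ) ∞,
      ∀ x ∈ U, ∀ y ∈ U, dist (f x) (f y) = dist (φ x) (φ y) := by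
    classical
    refine ⟨fun x => if hx : x ∈ U then
      kuratowskiEmbedding (ψ '' U) ⟨ψ x, mem_image_of_mem ψ hx⟩ else 0, fun x hx y hy => ?_⟩
    simp only [dif_pos hx, dif_pos hy, hembed.dist_eq]
    rfl
  have hfU : LipschitzOnWith K f U := LipschitzOnWith.of_dist_le_mul fun x hx y hy =>
    (hf x hx y hy).trans_le (hφ.dist_le_mul x hx y hy)
  obtain ⟨Φ, hΦ, hfΦ⟩ := hfU.extend_lp_infty
  exact ⟨Φ, hΦ, fun x hx y hy => by rw [← hfΦ hx, ← hfΦ hy, hf x hx y hy]⟩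

theorem metric_differentiability_general {E X : Type*} [NormedAddCommGroup E] [NormedSpace ℝ E]
    [FiniteDimensional ℝ E] [MeasurableSpace E] [BorelSpace E] [PseudoMetricSpace X]
    (μ : Measure E) [μ.IsAddHaarMeasure] {U : Set E} (hU : IsOpen U) {φ : E → X} {K : ℝ≥0}
    (hφ : LipschitzOnWith K φ U) :
    (∀ᵐ z ∂μ.restrict U, ∀ v, ∃ L, HasMetricDirDerivAt φ z v L) ∧
    ∃ Ks : ℕ → Set E, (∀ i, IsCompact (Ks i)) ∧ (∀ i, Ks i ⊆ U) ∧ μ (U \ ⋃ i, Ks i) = 0 ∧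
      ∀ i, ∀ ε > (0 : ℝ), ∃ r > (0 : ℝ), ∀ z ∈ Ks i, ∀ v w : E,
        ‖v‖ ≤ r → ‖w‖ ≤ r → z + w ∈ Ks i →
          ∃ L, HasMetricDirDerivAt φ z (v - w) L ∧
            |dist (φ (z + v)) (φ (z + w)) - L| ≤ ε * ‖v - w‖ := by
  obtain ⟨Φ, hΦ, hdist⟩ := exists_lipschitzWith_dist_eq hφ
  have hderiv {z v L} (hz : z ∈ U) : HasMetricDirDerivAt Φ z v L ↔ HasMetricDirDerivAt φ z v L :=
    hasMetricDirDerivAt_congr ((hU.eventually_mem hz).mono fun y hy => hdist y hy z hz)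
  refine ⟨?_, ?_⟩
  · filter_upwards [ae_restrict_of_ae (ae_forall_exists_hasMetricDirDerivAt μ hΦ),
      ae_restrict_mem hU.measurableSet] with z hz hzU v
    exact (hz v).imp fun L => (hderiv hzU).1
  obtain ⟨Ks, hKs, hKU, hnull, hunif⟩ :=
    exists_isCompact_seq_tendstoUniformlyOn_sphereQuotient (φ := ⟨Φ, hΦ.continuous⟩) μ hΦ
      hU.measurableSet
  refine ⟨Ks, hKs, hKU, hnull, fun i ε hε => ?_⟩
  obtain ⟨G, hG⟩ := hunif i
  obtain ⟨r, hr, hradius⟩ := exists_radius_abs_dist_sub_le (hKs i) hG hε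
  obtain ⟨δ, hδ, hthick⟩ := (hKs i).exists_cthickening_subset_open hU (hKU i)
  refine ⟨min r δ, lt_min hr hδ, fun z hz v w hv hw hzw => ?_⟩
  have hzv : z + v ∈ U := hthick <| mem_cthickening_of_dist_le _ z _ _ hz <| by
    simpa using hv.trans (min_le_right r δ)
  obtain ⟨L, hL, hle⟩ := hradius z hz v w (hv.trans (min_le_left r δ)) (hw.trans (min_le_left r δ))
    hzw
  exact ⟨L, (hderiv (hKU i hz)).1 hL, by rwa [← hdist _ hzv _ (hKU i hzw)]⟩

theorem metric_differentiability {X : Type*} [MetricSpace X] (k : ℕ)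
    (U : Set (EuclideanSpace ℝ (Fin k))) (hU : IsOpen U)
    (φ : EuclideanSpace ℝ (Fin k) → X) (K : NNReal) (hφ : LipschitzOnWith K φ U) :
    (∀ᵐ z ∂(MeasureTheory.volume.restrict U), ∀ v, ∃ L, HasMDDerivAt φ z v L) ∧
    ∃ Ks : ℕ → Set (EuclideanSpace ℝ (Fin k)),
      (∀ i, IsCompact (Ks i)) ∧ (∀ i, Ks i ⊆ U) ∧
      MeasureTheory.volume (U \ ⋃ i, Ks i) = 0 ∧
      ∀ i, ∀ ε > (0:ℝ), ∃ r > (0:ℝ),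
        ∀ z ∈ Ks i, ∀ v w : EuclideanSpace ℝ (Fin k),
          ‖v‖ ≤ r → ‖w‖ ≤ r → z + v ∈ U → z + w ∈ Ks i →
          ∀ L, HasMDDerivAt φ z (v - w) L →
            |dist (φ (z + v)) (φ (z + w)) - L| ≤ ε * ‖v - w‖ := by
  obtain ⟨hae, Ks, hKs, hKU, hnull, hradius⟩ := metric_differentiability_general volume hU hφ
  refine ⟨hae, Ks, hKs, hKU, hnull, fun i ε hε => (hradius i ε hε).imp fun r ⟨hr, H⟩ => ⟨hr, ?_⟩⟩
  intro z hz v w hv hw _ hzw L hL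
  obtain ⟨L', hL', hle⟩ := H z hz v w hv hw hzw
  rwa [tendsto_nhds_unique hL hL']
end

section
/- Let X be a metric space and γ : (a,b) → X a Lipschitz curve. Then for almost every t ∈ (a,b) the limit lim_{r→0⁺} d(γ(t+r), γ(t))/r exists. -/
/-!
A Lipschitz curve has separable image, so by Fréchet's embedding and coordinatewise extension it
may be taken to be a Lipschitz map `f : ℝ → ℓ^∞`. Its coordinates are differentiable almost
everywhere, and its metric derivative is `m t = sup_i |(f_i)' t|`: each difference quotient of `f`
dominates those of its coordinates, hence the lower limit is at least `m t`, while integrating the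
`(f_i)'` gives `dist (f r) (f t) ≤ |∫_t^r m|`, hence the upper limit is at most `m t` wherever the
primitive of the bounded function `m` has derivative `m t`.
-/

open MeasureTheory Set Filter Topology TopologicalSpace
open scoped NNReal ENNReal lp

section MetricDerivative

variable {X : Type*} [PseudoMetricSpace X] {γ : ℝ → X} {l t : ℝ} {s : Set ℝ}

/-- The curve `γ` has metric derivative (speed) `l` at `t` along `s`: the quotient
`d(γ r, γ t) / |r - t|` tends to `l` as `r ≠ t` tends to `t` in `s`, from both sides. As for
`HasDerivWithinAt`, every `l` qualifies when `t` is not an accumulation point of `s`. -/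
def HasMetricDerivWithinAt (γ : ℝ → X) (l : ℝ) (s : Set ℝ) (t : ℝ) : Prop :=
  Tendsto (fun r => dist (γ r) (γ t) / |r - t|) (𝓝[s \ {t}] t) (𝓝 l)

lemma HasMetricDerivWithinAt.mono {s' : Set ℝ} (h : HasMetricDerivWithinAt γ l s' t)
    (hs : s ⊆ s') : HasMetricDerivWithinAt γ l s t :=
  h.mono_left (nhdsWithin_mono t (sdiff_subset_sdiff_left hs))

lemma HasMetricDerivWithinAt.congr_dist {Y : Type*} [PseudoMetricSpace Y] {δ : ℝ → Y}
    (h : HasMetricDerivWithinAt δ l s t) (hdist : ∀ r ∈ s, dist (δ r) (δ t) = dist (γ r) (γ t)) :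
    HasMetricDerivWithinAt γ l s t :=
  Tendsto.congr' (eventually_mem_nhdsWithin.mono fun r hr => by rw [hdist r hr.1]) h

lemma HasMetricDerivWithinAt.tendsto_dist_div_right (h : HasMetricDerivWithinAt γ l s t)
    (hs : s ∈ 𝓝[>] t) :
    Tendsto (fun r => dist (γ (t + r)) (γ t) / r) (𝓝[>] 0) (𝓝 l) := by
  have hadd : Tendsto (t + ·) (𝓝[>] 0) (𝓝[>] t) :=
    tendsto_nhdsWithin_iff.2
      ⟨(Continuous.tendsto' (by fun_prop) 0 t (add_zero t)).mono_left nhdsWithin_le_nhds,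
        eventually_mem_nhdsWithin.mono fun r (hr : 0 < r) => lt_add_of_pos_right t hr⟩
  have hle : 𝓝[>] t ≤ 𝓝[s \ {t}] t := by
    refine nhdsWithin_le_of_mem ?_
    filter_upwards [hs, self_mem_nhdsWithin] with r hrs (hr : t < r)
    exact ⟨hrs, hr.ne'⟩
  refine (Tendsto.comp h (hadd.mono_right hle)).congr' ?_
  filter_upwards [self_mem_nhdsWithin] with r (hr : 0 < r)
  simp [abs_of_pos hr]

lemma hasMetricDerivWithinAt_of_hasDerivWithinAt {E : Type*} [NormedAddCommGroup E]
    [NormedSpace ℝ E] {f : ℝ → E} {f' : E} (h : HasDerivWithinAt f f' s t) :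
    HasMetricDerivWithinAt f ‖f'‖ s t := by
  refine (hasDerivWithinAt_iff_tendsto_slope.1 h).norm.congr fun r => ?_
  rw [slope_def_module, norm_smul, norm_inv, Real.norm_eq_abs, dist_eq_norm, inv_mul_eq_div]

end MetricDerivative

section Embedding

variable {X : Type*} [PseudoMetricSpace X]

lemma exists_lpInfty_dist_eq_of_isSeparable {S : Set X} (hS : IsSeparable S) :
    ∃ e : X → ℓ^∞(ℕ, ℝ), ∀ x ∈ S, ∀ y ∈ S, dist (e x) (e y) = dist x y := by
  have : SeparableSpace S := hS.separableSpace
  have : SeparableSpace (SeparationQuotient S) :=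
    SeparationQuotient.surjective_mk.denseRange.separableSpace SeparationQuotient.continuous_mk
  let e : S → ℓ^∞(ℕ, ℝ) := kuratowskiEmbedding (SeparationQuotient S) ∘ SeparationQuotient.mk
  have he (x y : S) : dist (e x) (e y) = dist x y :=
    ((kuratowskiEmbedding.isometry _).dist_eq _ _).trans (SeparationQuotient.dist_mk x y)
  refine ⟨Function.extend Subtype.val e 0, fun x hx y hy => ?_⟩
  have hext (z : S) : Function.extend Subtype.val e 0 (z : X) = e z :=
    Subtype.val_injective.extend_apply e 0 z
  rw [hext ⟨x, hx⟩, hext ⟨y, hy⟩, he, Subtype.dist_eq]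

lemma exists_lipschitzWith_lpInfty_dist_eq {α : Type*} [PseudoMetricSpace α] {γ : α → X}
    {s : Set α} {K : ℝ≥0} (hγ : LipschitzOnWith K γ s) (hs : IsSeparable (γ '' s)) :
    ∃ f : α → ℓ^∞(ℕ, ℝ), LipschitzWith K f ∧
      ∀ x ∈ s, ∀ y ∈ s, dist (f x) (f y) = dist (γ x) (γ y) := by
  obtain ⟨e, he⟩ := exists_lpInfty_dist_eq_of_isSeparable hs
  have hdist : ∀ x ∈ s, ∀ y ∈ s, dist (e (γ x)) (e (γ y)) = dist (γ x) (γ y) := fun x hx y hy =>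
    he _ (mem_image_of_mem γ hx) _ (mem_image_of_mem γ hy)
  have heγ : LipschitzOnWith K (e ∘ γ) s := .of_dist_le_mul fun x hx y hy =>
    (hdist x hx y hy).trans_le (hγ.dist_le_mul x hx y hy)
  obtain ⟨f, hf, heq⟩ := heγ.extend_lp_infty
  exact ⟨f, hf, fun x hx y hy => by rw [← heq hx, ← heq hy]; exact hdist x hx y hy⟩

end Embedding

section CoordSpeed

variable {ι : Type*} {f : ℝ → ℓ^∞(ι, ℝ)} {K : ℝ≥0}

/-- The supremum of the speeds of the coordinates of a curve in `ℓ^∞`, the candidate for its metric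
derivative. It has the junk value `0` where these speeds are unbounded, which does not happen for a
Lipschitz curve. -/
noncomputable def coordSpeed (f : ℝ → ℓ^∞(ι, ℝ)) (t : ℝ) : ℝ :=
  ⨆ i, |deriv (f · i) t|

lemma coordSpeed_nonneg (f : ℝ → ℓ^∞(ι, ℝ)) (t : ℝ) : 0 ≤ coordSpeed f t :=
  Real.iSup_nonneg fun _ => abs_nonneg _

lemma measurable_coordSpeed [Countable ι] (f : ℝ → ℓ^∞(ι, ℝ)) : Measurable (coordSpeed f) :=
  .iSup fun i => (measurable_deriv (f · i)).norm

lemma abs_deriv_coord_le (hf : LipschitzWith K f) (i : ι) (t : ℝ) : |deriv (f · i) t| ≤ K :=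
  norm_deriv_le_of_lipschitz ((LipschitzWith.coordinate K).1 hf i)

lemma abs_deriv_coord_le_coordSpeed (hf : LipschitzWith K f) (i : ι) (t : ℝ) :
    |deriv (f · i) t| ≤ coordSpeed f t :=
  le_ciSup (f := fun i => |deriv (f · i) t|)
    ⟨K, forall_mem_range.2 fun i => abs_deriv_coord_le hf i t⟩ i

lemma coordSpeed_le (hf : LipschitzWith K f) (t : ℝ) : coordSpeed f t ≤ K :=
  Real.iSup_le (fun i => abs_deriv_coord_le hf i t) K.coe_nonneg

lemma locallyIntegrable_coordSpeed [Countable ι] (hf : LipschitzWith K f) :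
    LocallyIntegrable (coordSpeed f) volume :=
  (locallyIntegrable_const (K : ℝ)).mono (measurable_coordSpeed f).aestronglyMeasurable <|
    .of_forall fun t => abs_le_abs_of_nonneg (coordSpeed_nonneg f t) (coordSpeed_le hf t)

lemma dist_le_abs_integral_coordSpeed [Countable ι] (hf : LipschitzWith K f) (r t : ℝ) :
    dist (f r) (f t) ≤ |∫ x in t..r, coordSpeed f x| := by
  rw [dist_eq_norm]
  refine lp.norm_le_of_forall_le (abs_nonneg _) fun i => ?_
  have hac : AbsolutelyContinuousOnInterval (f · i) t r :=
    ((LipschitzWith.coordinate K).1 hf i).lipschitzOnWith.absolutelyContinuousOnInterval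
  have hint : IntervalIntegrable (coordSpeed f) volume t r :=
    ((locallyIntegrable_coordSpeed hf).integrableOn_isCompact isCompact_uIcc).intervalIntegrable
  calc
    ‖f r i - f t i‖ = ‖∫ x in t..r, deriv (f · i) x‖ := by rw [hac.integral_deriv_eq_sub]
    _ ≤ |∫ x in t..r, coordSpeed f x| :=
      intervalIntegral.norm_integral_le_abs_of_norm_le
        (.of_forall fun x => abs_deriv_coord_le_coordSpeed hf i x) hint

lemma eventually_lt_dist_div_of_lt_coordSpeed {l t : ℝ}
    (hdiff : ∀ i, DifferentiableAt ℝ (f · i) t) (hl : l < coordSpeed f t) :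
    ∀ᶠ r in 𝓝[univ \ {t}] t, l < dist (f r) (f t) / |r - t| := by
  rcases isEmpty_or_nonempty ι with hι | hι
  · have hl0 : l < 0 := by simpa only [coordSpeed, Real.iSup_of_isEmpty] using hl
    exact .of_forall fun r => hl0.trans_le (by positivity)
  obtain ⟨i, hi⟩ := exists_lt_of_lt_ciSup hl
  have hcoord : HasMetricDerivWithinAt (f · i) |deriv (f · i) t| univ t :=
    hasMetricDerivWithinAt_of_hasDerivWithinAt (hdiff i).hasDerivAt.hasDerivWithinAt
  filter_upwards [hcoord.eventually_const_lt hi] with r hr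
  have hle : dist (f r i) (f t i) ≤ dist (f r) (f t) := by
    simpa only [dist_eq_norm, lp.coeFn_sub, Pi.sub_apply] using
      lp.norm_apply_le_norm ENNReal.top_ne_zero (f r - f t) i
  exact hr.trans_le (by gcongr)

lemma eventually_dist_div_lt_of_coordSpeed_lt [Countable ι] (hf : LipschitzWith K f) {l t : ℝ}
    (hprim : HasDerivAt (fun r => ∫ x in t..r, coordSpeed f x) (coordSpeed f t) t)
    (hl : coordSpeed f t < l) :
    ∀ᶠ r in 𝓝[univ \ {t}] t, dist (f r) (f t) / |r - t| < l := by
  have hspeed : HasMetricDerivWithinAt (fun r => ∫ x in t..r, coordSpeed f x)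
      |coordSpeed f t| univ t :=
    hasMetricDerivWithinAt_of_hasDerivWithinAt hprim.hasDerivWithinAt
  rw [abs_of_nonneg (coordSpeed_nonneg f t)] at hspeed
  filter_upwards [hspeed.eventually_lt_const hl] with r hr
  rw [intervalIntegral.integral_same, Real.dist_0_eq_abs] at hr
  exact lt_of_le_of_lt (by gcongr; exact dist_le_abs_integral_coordSpeed hf r t) hr

lemma ae_hasMetricDerivWithinAt_coordSpeed [Countable ι] (hf : LipschitzWith K f) :
    ∀ᵐ t, HasMetricDerivWithinAt f (coordSpeed f t) univ t := by
  have hdiff : ∀ᵐ t, ∀ i, DifferentiableAt ℝ (f · i) t := ae_all_iff.2 fun i =>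
    ((LipschitzWith.coordinate K).1 hf i).ae_differentiableAt_real
  filter_upwards [hdiff,
    LocallyIntegrable.ae_hasDerivAt_integral (locallyIntegrable_coordSpeed hf)] with t hdt hprim
  exact tendsto_order.2 ⟨fun l hl => eventually_lt_dist_div_of_lt_coordSpeed hdt hl,
    fun l hl => eventually_dist_div_lt_of_coordSpeed_lt hf (hprim t) hl⟩

end CoordSpeed

theorem metric_deriv_exists_ae_one_dim_general {X : Type*} [PseudoMetricSpace X] {γ : ℝ → X}
    {s : Set ℝ} {K : ℝ≥0} (hγ : LipschitzOnWith K γ s) :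
    ∀ᵐ t, t ∈ s → ∃ l, HasMetricDerivWithinAt γ l s t := by
  have hsep : IsSeparable (γ '' s) := hγ.continuousOn.isSeparable_image (.of_separableSpace s)
  obtain ⟨f, hf, hdist⟩ := exists_lipschitzWith_lpInfty_dist_eq hγ hsep
  filter_upwards [ae_hasMetricDerivWithinAt_coordSpeed hf] with t hft ht
  exact ⟨coordSpeed f t, (hft.mono (subset_univ s)).congr_dist fun r hr => hdist r hr t ht⟩

theorem metric_deriv_exists_ae_one_dim {X : Type*} [MetricSpace X]
    (a b : ℝ) (γ : ℝ → X) (L : NNReal) (hγ : LipschitzOnWith L γ (Set.Ioo a b)) :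
    ∀ᵐ t ∂(MeasureTheory.volume.restrict (Set.Ioo a b)),
      ∃ l : ℝ, Filter.Tendsto (fun r : ℝ => dist (γ (t + r)) (γ t) / r)
        (nhdsWithin 0 (Set.Ioi 0)) (nhds l) :=
  (ae_restrict_iff' measurableSet_Ioo).2 <| (metric_deriv_exists_ae_one_dim_general hγ).mono
    fun _ h ht => (h ht).imp fun _ hl => hl.tendsto_dist_div_right <|
      mem_nhdsWithin_of_mem_nhds (isOpen_Ioo.mem_nhds ht)
end

section
/- Let U ⊆ ℝᵏ be open, (X,d) a metric space, φ : U → X and ρ : X → ℝᵏ Lipschitz maps, and z ∈ U. If ρ∘φ is (Fréchet) differentiable at z, the metric directional derivative md φ_z(v) exists for every v ∈ ℝᵏ, and md φ_z is degenerate (i.e., md φ_z(v₀) = 0 for some v₀ ≠ 0), then det(D_z[ρ∘φ]) = 0, where D_z[ρ∘φ] is the derivative of ρ∘φ at z. -/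
/-!
Post-composing with the `K`-Lipschitz map `ρ` multiplies metric difference quotients by at most `K`,
so in the limit `‖D_z(ρ ∘ φ) v‖ ≤ K * md φ_z(v)`. A nonzero `v` with `md φ_z(v) = 0` therefore lies
in the kernel of `D_z(ρ ∘ φ)`.
-/

open Filter Topology
open scoped NNReal

theorem norm_hasLineDerivAt_comp_le {E F X : Type*} [AddCommGroup E] [Module ℝ E]
    [NormedAddCommGroup F] [NormedSpace ℝ F] [PseudoMetricSpace X]
    {φ : E → X} {ρ : X → F} {K : ℝ≥0} {z v : E} {w : F} {L : ℝ} (hρ : LipschitzWith K ρ)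
    (hw : HasLineDerivAt ℝ (ρ ∘ φ) w z v)
    (hL : Tendsto (fun r : ℝ => dist (φ (z + r • v)) (φ z) / r) (𝓝[>] 0) (𝓝 L)) :
    ‖w‖ ≤ K * L := by
  refine le_of_tendsto_of_tendsto hw.tendsto_slope_zero_right.norm (hL.const_mul (K : ℝ)) ?_
  filter_upwards [self_mem_nhdsWithin] with r (hr : 0 < r)
  calc ‖r⁻¹ • (ρ (φ (z + r • v)) - ρ (φ z))‖
      = dist (ρ (φ (z + r • v))) (ρ (φ z)) / r := by
        rw [norm_smul, norm_inv, Real.norm_of_nonneg hr.le, ← dist_eq_norm, inv_mul_eq_div]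
    _ ≤ K * dist (φ (z + r • v)) (φ z) / r := by
        gcongr
        exact hρ.dist_le_mul _ _
    _ = K * (dist (φ (z + r • v)) (φ z) / r) := mul_div_assoc _ _ _

theorem linearMap_det_eq_zero_of_apply_eq_zero {R M : Type*} [CommRing R] [IsDomain R]
    [AddCommGroup M] [Module R M] [Module.Free R M] [Module.Finite R M] {f : M →ₗ[R] M} {v : M}
    (hv : v ≠ 0) (hfv : f v = 0) : LinearMap.det f = 0 :=
  LinearMap.det_eq_zero_iff_ker_ne_bot.2 fun hker => hv (LinearMap.ker_eq_bot'.1 hker v hfv)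

theorem det_eq_zero_of_md_degenerate_general {E X : Type*} [NormedAddCommGroup E]
    [NormedSpace ℝ E] [FiniteDimensional ℝ E] [PseudoMetricSpace X]
    {φ : E → X} {ρ : X → E} {K : ℝ≥0} {z v : E} {f' : E →L[ℝ] E} (hρ : LipschitzWith K ρ)
    (hf' : HasFDerivAt (ρ ∘ φ) f' z) (hv : v ≠ 0)
    (hφv : Tendsto (fun r : ℝ => dist (φ (z + r • v)) (φ z) / r) (𝓝[>] 0) (𝓝 0)) :
    LinearMap.det (f' : E →ₗ[ℝ] E) = 0 := by
  have hnorm : ‖f' v‖ ≤ K * 0 := norm_hasLineDerivAt_comp_le hρ (hf'.hasLineDerivAt v) hφv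
  have hker : f' v = 0 := norm_le_zero_iff.1 (hnorm.trans_eq (mul_zero _))
  exact linearMap_det_eq_zero_of_apply_eq_zero hv hker

theorem det_eq_zero_of_md_degenerate {X : Type*} [MetricSpace X] (k : ℕ)
    (U : Set (EuclideanSpace ℝ (Fin k))) (hU : IsOpen U)
    (φ : EuclideanSpace ℝ (Fin k) → X) (ρ : X → EuclideanSpace ℝ (Fin k))
    (Kφ Kρ : NNReal) (hφ : LipschitzOnWith Kφ φ U) (hρ : LipschitzWith Kρ ρ)
    (z : EuclideanSpace ℝ (Fin k)) (hz : z ∈ U)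
    (hdiff : DifferentiableAt ℝ (ρ ∘ φ) z)
    (hmd : ∀ v, ∃ L, HasMDDerivAt φ z v L)
    (hdeg : ∃ v ≠ 0, HasMDDerivAt φ z v 0) :
    LinearMap.det ((fderiv ℝ (ρ ∘ φ) z) :
      EuclideanSpace ℝ (Fin k) →ₗ[ℝ] EuclideanSpace ℝ (Fin k)) = 0 := by
  obtain ⟨v, hv, hφv⟩ := hdeg
  exact det_eq_zero_of_md_degenerate_general hρ hdiff.hasFDerivAt hv hφv
end

section
/- Let ‖·‖ be a norm on ℝ² with closed unit ball B̂(0,1), let r₁ > 0 be the maximal radius such that the Euclidean closed ball B(0,r₁) is contained in B̂(0,1), let v₀ be a point lying on both the Euclidean sphere of radius r₁ about 0 and the ‖·‖-unit sphere, and set y := 2v₀. Then (1/h)·diam_{‖·‖}[B̂(0, 1+h) ∩ B̂(y, 1+h)] → ∞ as h → 0⁺, where B̂(x,r) denotes the closed ‖·‖-ball of radius r about x and diam_{‖·‖} the diameter with respect to ‖·‖. -/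
/-!
The inclusion of `B(0, r)` in the unit ball of `p` says that `r * p w ≤ ‖w‖` for all `w`. Let `y`
be orthogonal to `v` with `‖y‖ = r * √h`. By Pythagoras the Euclidean norms of `±v ± y` are at most
`r * √(1 + h) ≤ r * (1 + h)`, so both points `v ± y` lie in the two `p`-balls of radius `1 + h`
about `0` and `2 • v`. The diameter is thus at least `2 * p y`, which is of order `√h`, and
`√h / h → ∞`.
-/

open Filter Topology
open scoped RealInnerProductSpace

section Diameter

variable {E : Type*} [AddCommGroup E] [Module ℝ E] (p : Seminorm ℝ E)

/-- The diameter of a set with respect to a seminorm, used for seminorms other than the norm the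
space carries. As a supremum of reals it is `0` when `s` is `p`-unbounded. -/
noncomputable def seminormDiam (s : Set E) : ℝ :=
  sSup {d | ∃ a b, a ∈ s ∧ b ∈ s ∧ d = p (a - b)}

theorem le_seminormDiam_of_subset_closedBall {s : Set E} {c : E} {ρ : ℝ}
    (hs : s ⊆ p.closedBall c ρ) {a b : E} (ha : a ∈ s) (hb : b ∈ s) :
    p (a - b) ≤ seminormDiam p s := by
  refine le_csSup ⟨ρ + ρ, ?_⟩ ⟨a, b, ha, hb, rfl⟩
  rintro _ ⟨x, y, hx, hy, rfl⟩
  have hyc : p (c - y) ≤ ρ := map_sub_rev p y c ▸ hs hy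
  calc p (x - y) ≤ p (x - c) + p (c - y) := le_map_sub_add_map_sub p x c y
    _ ≤ ρ + ρ := add_le_add (hs hx) hyc

end Diameter

theorem mul_seminorm_le_norm_of_ball_subset {E : Type*} [SeminormedAddCommGroup E]
    [NormedSpace ℝ E] {p : Seminorm ℝ E} {r : ℝ} (hball : Metric.ball 0 r ⊆ p.closedBall 0 1)
    (w : E) : r * p w ≤ ‖w‖ := by
  by_contra! hlt
  obtain ⟨c, hwc, hcp⟩ := exists_between hlt
  have hc : 0 < c := (norm_nonneg w).trans_lt hwc
  have hr : 0 < r := pos_of_mul_pos_left (hc.trans hcp) (apply_nonneg p w)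
  have hmem : (r / c) • w ∈ Metric.ball 0 r := by
    rw [mem_ball_zero_iff, norm_smul, Real.norm_of_nonneg (by positivity), div_mul_eq_mul_div,
      div_lt_iff₀ hc]
    gcongr
  have hle : p ((r / c) • w) ≤ 1 := p.mem_closedBall_zero.mp (hball hmem)
  rw [map_smul_eq_mul, Real.norm_of_nonneg (by positivity), div_mul_eq_mul_div,
    div_le_one hc] at hle
  exact hle.not_gt hcp

theorem exists_ne_zero_inner_eq_zero_of_one_lt_rank {E : Type*} [NormedAddCommGroup E]
    [InnerProductSpace ℝ E] (hE : 1 < Module.rank ℝ E) (v : E) : ∃ u : E, u ≠ 0 ∧ ⟪v, u⟫ = 0 := by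
  have hspan : ℝ ∙ v ≠ ⊤ := fun htop =>
    hE.not_ge (rank_le_one_iff.mpr ⟨v, (Submodule.span_singleton_eq_top_iff ℝ v).mp htop⟩)
  obtain ⟨u, hu, hu0⟩ :=
    Submodule.exists_mem_ne_zero_of_ne_bot (mt Submodule.orthogonal_eq_bot_iff.mp hspan)
  exact ⟨u, hu0, Submodule.mem_orthogonal_singleton_iff_inner_right.mp hu⟩

section InnerProductSpace

variable {E : Type*} [SeminormedAddCommGroup E] [InnerProductSpace ℝ E]

theorem norm_add_le_of_inner_eq_zero_of_norm_le_mul_sqrt {x y : E} {r h : ℝ} (hxy : ⟪x, y⟫ = 0)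
    (hh : 0 ≤ h) (hx : ‖x‖ ≤ r) (hy : ‖y‖ ≤ r * √h) : ‖x + y‖ ≤ r * (1 + h) := by
  have hr : 0 ≤ r := (norm_nonneg x).trans hx
  refine le_of_sq_le_sq ?_ (by positivity)
  calc ‖x + y‖ ^ 2 = ‖x‖ ^ 2 + ‖y‖ ^ 2 := by rw [norm_add_sq_real, hxy]; ring
    _ ≤ r ^ 2 + (r * √h) ^ 2 := by gcongr
    _ = r ^ 2 * (1 + h) := by rw [mul_pow, Real.sq_sqrt hh]; ring
    _ ≤ (r * (1 + h)) ^ 2 := by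
      rw [mul_pow]
      gcongr
      exact le_self_pow₀ (by linarith) two_ne_zero

variable {p : Seminorm ℝ E} {r : ℝ} {v : E}

theorem add_mem_closedBall_inter_closedBall (hr : 0 < r)
    (hball : Metric.ball 0 r ⊆ p.closedBall 0 1) (hv : ‖v‖ ≤ r) {y : E} (hvy : ⟪v, y⟫ = 0)
    {h : ℝ} (hh : 0 ≤ h) (hy : ‖y‖ ≤ r * √h) :
    v + y ∈ p.closedBall 0 (1 + h) ∩ p.closedBall ((2 : ℝ) • v) (1 + h) := by
  have seminorm_le {w : E} (hw : ‖w‖ ≤ r * (1 + h)) : p w ≤ 1 + h :=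
    le_of_mul_le_mul_left ((mul_seminorm_le_norm_of_ball_subset hball w).trans hw) hr
  constructor
  · rw [p.mem_closedBall_zero]
    exact seminorm_le (norm_add_le_of_inner_eq_zero_of_norm_le_mul_sqrt hvy hh hv hy)
  · have hreflect : v + y - (2 : ℝ) • v = -v + y := by module
    rw [p.mem_closedBall, hreflect]
    exact seminorm_le (norm_add_le_of_inner_eq_zero_of_norm_le_mul_sqrt
      (by rw [inner_neg_left, hvy, neg_zero]) hh (by rwa [norm_neg]) hy)

theorem two_mul_le_seminormDiam_closedBall_inter_closedBall (hr : 0 < r)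
    (hball : Metric.ball 0 r ⊆ p.closedBall 0 1) (hv : ‖v‖ ≤ r) {y : E} (hvy : ⟪v, y⟫ = 0)
    {h : ℝ} (hh : 0 ≤ h) (hy : ‖y‖ ≤ r * √h) :
    2 * p y ≤ seminormDiam p (p.closedBall 0 (1 + h) ∩ p.closedBall ((2 : ℝ) • v) (1 + h)) := by
  have hadd := add_mem_closedBall_inter_closedBall hr hball hv hvy hh hy
  have hsub := add_mem_closedBall_inter_closedBall hr hball hv (y := -y)
    (by rw [inner_neg_right, hvy, neg_zero]) hh (by rwa [norm_neg])
  calc 2 * p y = p ((2 : ℝ) • y) := by rw [map_smul_eq_mul, Real.norm_two]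
    _ = p (v + y - (v + -y)) := by congr 1; module
    _ ≤ _ := le_seminormDiam_of_subset_closedBall p Set.inter_subset_left hadd hsub

theorem diam_ratio_tendsto_atTop_of_norm_general (hr : 0 < r)
    (hball : Metric.ball 0 r ⊆ p.closedBall 0 1) (hv : ‖v‖ ≤ r) {u : E} (hvu : ⟪v, u⟫ = 0)
    (hu : p u ≠ 0) :
    Tendsto (fun h : ℝ => (1 / h) *
        seminormDiam p (p.closedBall 0 (1 + h) ∩ p.closedBall ((2 : ℝ) • v) (1 + h)))
      (𝓝[>] 0) atTop := by
  have hpu : 0 < p u := (apply_nonneg p u).lt_of_ne' hu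
  have hnu : 0 < ‖u‖ := (mul_pos hr hpu).trans_le (mul_seminorm_le_norm_of_ball_subset hball u)
  have hlim : Tendsto (fun h : ℝ => 2 * (r / ‖u‖ * p u) * √h⁻¹) (𝓝[>] 0) atTop :=
    (Real.tendsto_sqrt_atTop.comp tendsto_inv_nhdsGT_zero).const_mul_atTop (by positivity)
  refine tendsto_atTop_mono' _ ?_ hlim
  filter_upwards [self_mem_nhdsWithin] with h (hh : 0 < h)
  set y : E := (√h * (r / ‖u‖)) • u with hy
  have hvy : ⟪v, y⟫ = 0 := by rw [hy, inner_smul_right, hvu, mul_zero]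
  have hny : ‖y‖ = r * √h := by
    rw [hy, norm_smul, Real.norm_of_nonneg (by positivity)]
    field_simp
  have hpy : p y = √h * (r / ‖u‖) * p u := by
    rw [hy, map_smul_eq_mul, Real.norm_of_nonneg (by positivity)]
  calc 2 * (r / ‖u‖ * p u) * √h⁻¹ = 1 / h * (2 * p y) := by
        rw [hpy, Real.sqrt_inv, ← Real.sqrt_div_self]
        ring
    _ ≤ _ := by
      gcongr
      exact two_mul_le_seminormDiam_closedBall_inter_closedBall hr hball hv hvy hh.le hny.le

end InnerProductSpace

theorem diam_ratio_tendsto_atTop_of_norm (N : EuclideanSpace ℝ (Fin 2) → ℝ)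
    (hN0 : ∀ v, N v = 0 ↔ v = 0)
    (hNsmul : ∀ (s : ℝ) (v), N (s • v) = |s| * N v)
    (hNadd : ∀ v w, N (v + w) ≤ N v + N w)
    (r₁ : ℝ) (hr₁ : 0 < r₁)
    (hmax : IsGreatest {r : ℝ |
      Metric.closedBall (0 : EuclideanSpace ℝ (Fin 2)) r ⊆ {w | N w ≤ 1}} r₁)
    (v₀ : EuclideanSpace ℝ (Fin 2)) (hv₀ : ‖v₀‖ = r₁) (hNv₀ : N v₀ = 1) :
    Filter.Tendsto
      (fun h : ℝ => (1 / h) *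
        sSup {d : ℝ | ∃ a b : EuclideanSpace ℝ (Fin 2),
          N a ≤ 1 + h ∧ N (a - (2:ℝ) • v₀) ≤ 1 + h ∧
          N b ≤ 1 + h ∧ N (b - (2:ℝ) • v₀) ≤ 1 + h ∧ d = N (a - b)})
      (nhdsWithin 0 (Set.Ioi 0)) Filter.atTop := by
  obtain ⟨u, hu, hvu⟩ := exists_ne_zero_inner_eq_zero_of_one_lt_rank
    (Module.lt_rank_of_lt_finrank (n := 1) (by simp)) v₀
  simpa only [seminormDiam, Set.mem_inter_iff, Seminorm.mem_closedBall, sub_zero, and_assoc] using!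
    diam_ratio_tendsto_atTop_of_norm_general (p := Seminorm.of N hNadd hNsmul) hr₁
      (Metric.ball_subset_closedBall.trans (hmax.1.trans (Seminorm.closedBall_zero_eq ..).ge))
      hv₀.le hvu (mt (hN0 u).mp hu)
end

section
/- Let r > 0, h > 0, and let x, y ∈ ℝ² be points with Euclidean distance |x − y| = 2r. Then the Euclidean diameter of the intersection of the two closed Euclidean balls of radius r(1+h) centered at x and at y equals 2√(2h + h²)·r. -/
/-!
Let `m` be the midpoint of `x` and `y`. By Apollonius's theorem,
`|w - x|² + |w - y|² = 2 (|w - m|² + (|x - y| / 2)²)` for every point `w`. Hence the lens of the two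
balls of radius `R` lies in the ball of radius `s = √(R² - (|x - y| / 2)²)` about `m`. On the
perpendicular bisector of `x` and `y` the two terms on the left agree, so there the lens coincides
with that smaller ball. In dimension at least two the bisector contains antipodal points `m ± v`
with `|v| = s`, which are at distance `2 s` from each other.
-/

open AffineSubspace EuclideanGeometry Metric

theorem orthogonal_span_singleton_ne_bot {𝕜 E : Type*} [RCLike 𝕜] [NormedAddCommGroup E]
    [InnerProductSpace 𝕜 E] (hE : 1 < Module.rank 𝕜 E) (u : E) : (𝕜 ∙ u)ᗮ ≠ ⊥ := by
  intro hbot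
  have htop : (𝕜 ∙ u) = ⊤ := (𝕜 ∙ u).orthogonal_eq_bot_iff.mp hbot
  have hrank : Module.rank 𝕜 (𝕜 ∙ u) ≤ 1 := (rank_span_le {u}).trans_eq (Cardinal.mk_singleton u)
  rw [htop, rank_top] at hrank
  exact hE.not_ge hrank

section Lens

variable {V P : Type*} [NormedAddCommGroup V] [InnerProductSpace ℝ V] [MetricSpace P]
  [NormedAddTorsor V P] {x y : P} {R : ℝ}

theorem closedBall_inter_closedBall_subset_closedBall_midpoint :
    closedBall x R ∩ closedBall y R ⊆
      closedBall (midpoint ℝ x y) (√(R ^ 2 - (dist x y / 2) ^ 2)) := by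
  rintro w ⟨hwx, hwy⟩
  have hx : dist w x ^ 2 ≤ R ^ 2 := pow_le_pow_left₀ dist_nonneg hwx 2
  have hy : dist w y ^ 2 ≤ R ^ 2 := pow_le_pow_left₀ dist_nonneg hwy 2
  refine Real.le_sqrt_of_sq_le ?_
  linarith [dist_sq_add_dist_sq_eq_two_mul_dist_midpoint_sq_add_half_dist_sq w x y]

theorem closedBall_midpoint_inter_perpBisector_subset (hR : dist x y ≤ 2 * R) :
    closedBall (midpoint ℝ x y) (√(R ^ 2 - (dist x y / 2) ^ 2)) ∩ perpBisector x y ⊆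
      closedBall x R ∩ closedBall y R := by
  rintro w ⟨hwm, hw⟩
  have hR₀ : 0 ≤ R := by linarith [dist_nonneg (x := x) (y := y)]
  have hsq : 0 ≤ R ^ 2 - (dist x y / 2) ^ 2 :=
    sub_nonneg.mpr (pow_le_pow_left₀ (by positivity) (by linarith) 2)
  have hm : dist w (midpoint ℝ x y) ^ 2 ≤ R ^ 2 - (dist x y / 2) ^ 2 :=
    (Real.le_sqrt dist_nonneg hsq).mp hwm
  have hxy : dist w x = dist w y := mem_perpBisector_iff_dist_eq.mp hw
  have hwx : dist w x ≤ R := by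
    have hApollonius := dist_sq_add_dist_sq_eq_two_mul_dist_midpoint_sq_add_half_dist_sq w x y
    rw [← hxy] at hApollonius
    exact le_of_sq_le_sq (by linarith) hR₀
  exact ⟨hwx, hxy.symm.trans_le hwx⟩

theorem vadd_midpoint_mem_perpBisector {v : V} (hv : v ∈ (ℝ ∙ (y -ᵥ x))ᗮ) :
    v +ᵥ midpoint ℝ x y ∈ perpBisector x y :=
  vadd_mem_of_mem_direction (direction_perpBisector x y ▸ hv) (midpoint_mem_perpBisector x y)

variable (x y) in
theorem two_mul_le_diam_closedBall_midpoint_inter_perpBisector (hV : 1 < Module.rank ℝ V) {s : ℝ}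
    (hs : 0 ≤ s) :
    2 * s ≤ diam (closedBall (midpoint ℝ x y) s ∩ perpBisector x y) := by
  have : Nontrivial (ℝ ∙ (y -ᵥ x))ᗮ :=
    Submodule.nontrivial_iff_ne_bot.mpr (orthogonal_span_singleton_ne_bot hV _)
  obtain ⟨⟨v, hv⟩, hvs : ‖v‖ = s⟩ := exists_norm_eq (ℝ ∙ (y -ᵥ x))ᗮ hs
  have hmem {u : V} (hu : u ∈ (ℝ ∙ (y -ᵥ x))ᗮ) (hus : ‖u‖ = s) :
      u +ᵥ midpoint ℝ x y ∈ closedBall (midpoint ℝ x y) s ∩ perpBisector x y :=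
    ⟨by simp [hus], vadd_midpoint_mem_perpBisector hu⟩
  calc 2 * s = dist (v +ᵥ midpoint ℝ x y) (-v +ᵥ midpoint ℝ x y) := by
        rw [dist_vadd_cancel_right, dist_eq_norm, sub_neg_eq_add, ← two_smul ℝ v, norm_smul, hvs,
          Real.norm_two]
    _ ≤ diam (closedBall (midpoint ℝ x y) s ∩ perpBisector x y) :=
        dist_le_diam_of_mem (isBounded_closedBall.subset Set.inter_subset_left) (hmem hv hvs)
          (hmem (neg_mem hv) (by rw [norm_neg, hvs]))

theorem diam_lens_eq_general (hV : 1 < Module.rank ℝ V) (hR : dist x y ≤ 2 * R) :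
    diam (closedBall x R ∩ closedBall y R) = 2 * √(R ^ 2 - (dist x y / 2) ^ 2) := by
  apply le_antisymm
  · exact (diam_mono closedBall_inter_closedBall_subset_closedBall_midpoint
      isBounded_closedBall).trans (diam_closedBall (Real.sqrt_nonneg _))
  · exact (two_mul_le_diam_closedBall_midpoint_inter_perpBisector x y hV
      (Real.sqrt_nonneg _)).trans (diam_mono (closedBall_midpoint_inter_perpBisector_subset hR)
        (isBounded_closedBall.subset Set.inter_subset_left))

end Lens

theorem diam_lens_eq (r h : ℝ) (hr : 0 < r) (hh : 0 < h)
    (x y : EuclideanSpace ℝ (Fin 2)) (hxy : dist x y = 2 * r) :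
    Metric.diam (Metric.closedBall x (r * (1 + h)) ∩ Metric.closedBall y (r * (1 + h)))
      = 2 * Real.sqrt (2 * h + h ^ 2) * r := by
  have hrank : 1 < Module.rank ℝ (EuclideanSpace ℝ (Fin 2)) :=
    Module.one_lt_rank_of_one_lt_finrank (by simp)
  have hle : dist x y ≤ 2 * (r * (1 + h)) := by linarith [mul_pos hr hh]
  have hsq : (r * (1 + h)) ^ 2 - (2 * r / 2) ^ 2 = (2 * h + h ^ 2) * r ^ 2 := by ring
  rw [diam_lens_eq_general hrank hle, hxy, hsq, Real.sqrt_mul (by positivity),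
    Real.sqrt_sq hr.le, mul_assoc]
end
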